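/- arXiv:2401.01385 — 2 statements merged into one kernel-verified Lean document; each statement's English description precedes it below -/
import Mathlib

section
/- For any integer s ≥ 1, the series S̄_{4s-1,1}(y) = Σ_{n=1}^∞ (-1)^{n-1} n^{4s-1} / sinh(n y), viewed as a function of x via y = π K'(x)/K(x), lies in z^{4s} ℚ[σ], where z = (2/π)K(x) and σ = x(1-x); i.e., it equals z^{4s} times a polynomial in x(1-x) with rational coefficients. -/
/-- Ascending Pochhammer symbol `(a)_n`. -/
noncomputable def poch (a : ℝ) (n : ℕ) : ℝ := ∏ i ∈ Finset.range n, (a + i)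

/-- Gaussian hypergeometric series `₂F₁(a,b;c;x)`. -/
noncomputable def hypF (a b c x : ℝ) : ℝ :=
  ∑' m : ℕ, poch a m * poch b m / poch c m * x ^ m / m.factorial

/-- Complete elliptic integral of the first kind, `K(x) = (π/2)·₂F₁(1/2,1/2;1;x)`. -/
noncomputable def Kell (x : ℝ) : ℝ := (Real.pi / 2) * hypF (1/2) (1/2) 1 x

/-- `y = π K'/K`. -/
noncomputable def yEll (x : ℝ) : ℝ := Real.pi * Kell (1 - x) / Kell x

/-- `z = (2/π) K`. -/
noncomputable def zEll (x : ℝ) : ℝ := (2 / Real.pi) * Kell x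

open scoped BigOperators

noncomputable def T3 {K : Type*} [RCLike K] (q : K) : K := ∑' n : ℤ, q ^ (n ^ 2)
noncomputable def T2 {K : Type*} [RCLike K] (q : K) : K := ∑' n : ℤ, q ^ (n * (n + 1))

section thetaIds
variable {K : Type*} [RCLike K]

lemma summable_geom_int {r : ℝ} (h0 : 0 < r) (h1 : r < 1) :
    Summable (fun n : ℤ => r ^ (n.natAbs)) := by
  apply Summable.of_nat_of_neg
  · simpa using summable_geometric_of_lt_one h0.le h1
  · simpa using summable_geometric_of_lt_one h0.le h1

lemma T3_summable {q : K} (h0 : q ≠ 0) (h1 : ‖q‖ < 1) :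
    Summable (fun n : ℤ => ‖q ^ (n ^ 2)‖) := by
  have hq : 0 < ‖q‖ := norm_pos_iff.mpr h0
  refine Summable.of_nonneg_of_le (fun _ => norm_nonneg _) (fun n => ?_) (summable_geom_int hq h1)
  rw [norm_zpow, ← zpow_natCast]
  apply zpow_le_zpow_right_of_le_one₀ hq h1.le
  rw [Int.natCast_natAbs, ← sq_abs]
  rcases eq_or_ne n 0 with rfl | hn
  · simp
  · have : 1 ≤ |n| := Int.one_le_abs hn
    nlinarith

lemma T2_summable {q : K} (h0 : q ≠ 0) (h1 : ‖q‖ < 1) :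
    Summable (fun n : ℤ => ‖q ^ (n * (n + 1))‖) := by
  have hq : 0 < ‖q‖ := norm_pos_iff.mpr h0
  refine Summable.of_nonneg_of_le (fun _ => norm_nonneg _) (fun n => ?_)
    ((summable_geom_int hq h1).mul_left (‖q‖⁻¹))
  rw [norm_zpow, ← zpow_natCast, ← zpow_neg_one, ← zpow_add₀ hq.ne']
  apply zpow_le_zpow_right_of_le_one₀ hq h1.le
  rw [Int.natCast_natAbs]
  rcases abs_cases n with ⟨h, _⟩ | ⟨h, _⟩ <;> rw [h]  <;> nlinarith [sq_nonneg (n+1)]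

lemma tsum_split {f : ℤ × ℤ → K} (hf : Summable f) :
    ∑' p, f p = ∑' p : ℤ × ℤ, f (p.1 + p.2, p.1 - p.2)
      + ∑' p : ℤ × ℤ, f (p.1 + p.2 + 1, p.1 - p.2) := by
  let g : (ℤ × ℤ) ⊕ (ℤ × ℤ) → ℤ × ℤ :=
    Sum.elim (fun p => (p.1 + p.2, p.1 - p.2)) (fun p => (p.1 + p.2 + 1, p.1 - p.2))
  have hg : Function.Bijective g := by
    constructor
    · rintro (⟨a, b⟩ | ⟨a, b⟩) (⟨c, d⟩ | ⟨c, d⟩) h <;> simp [g] at h ⊢ <;> omega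
    · rintro ⟨m, n⟩
      rcases Int.even_or_odd' (m + n) with ⟨k, hk | hk⟩
      · exact ⟨Sum.inl (k, m - k), by simp [g]; omega⟩
      · exact ⟨Sum.inr (k, m - k - 1), by simp [g]; omega⟩
  have h2 : Summable (fun s => f (g s)) := (Equiv.ofBijective g hg).summable_iff.mpr hf
  rw [← (Equiv.ofBijective g hg).tsum_eq f]
  simp only [Equiv.ofBijective_apply]
  exact Summable.tsum_sum (f := fun s => f (g s)) (h2.comp_injective Sum.inl_injective)
    (h2.comp_injective Sum.inr_injective)

lemma qsq {q : K} (h0 : q ≠ 0) (h1 : ‖q‖ < 1) : q ^ 2 ≠ 0 ∧ ‖q ^ 2‖ < 1 :=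
  ⟨pow_ne_zero _ h0, by rw [norm_pow]; exact pow_lt_one₀ (norm_nonneg _) h1 two_ne_zero⟩

lemma tmulprod {f g : ℤ → K} (hf : Summable fun n => ‖f n‖) (hg : Summable fun n => ‖g n‖) :
    (∑' n, f n) * (∑' n, g n) = ∑' p : ℤ × ℤ, f p.1 * g p.2 :=
  tsum_mul_tsum_of_summable_norm hf hg

lemma tprod_split {f g : ℤ → K} (hf : Summable fun n => ‖f n‖) (hg : Summable fun n => ‖g n‖) :
    (∑' n, f n) * (∑' n, g n) = ∑' p : ℤ × ℤ, f (p.1 + p.2) * g (p.1 - p.2)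
      + ∑' p : ℤ × ℤ, f (p.1 + p.2 + 1) * g (p.1 - p.2) := by
  rw [tmulprod hf hg]
  exact tsum_split (f := fun p : ℤ × ℤ => f p.1 * g p.2) (summable_mul_of_summable_norm hf hg)

lemma T33 {q : K} (h0 : q ≠ 0) (h1 : ‖q‖ < 1) :
    T3 q ^ 2 = T3 (q ^ 2) ^ 2 + q * T2 (q ^ 2) ^ 2 := by
  obtain ⟨h0', h1'⟩ := qsq h0 h1
  have s3 := T3_summable h0 h1
  have s3' := T3_summable h0' h1'
  have s2' := T2_summable h0' h1'
  have a := tprod_split s3 s3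
  have b := tmulprod s3' s3'
  have c := tmulprod s2' s2'
  rw [sq (T3 q), sq (T3 (q ^ 2)), sq (T2 (q ^ 2))]
  unfold T3 T2
  rw [a, b, c, ← tsum_mul_left]
  congr 1
  · refine tsum_congr fun p => ?_
    rw [← zpow_natCast, ← zpow_mul, ← zpow_mul, ← zpow_add₀ h0, ← zpow_add₀ h0]
    congr 1; push_cast; ring
  · refine tsum_congr fun p => ?_
    rw [← zpow_natCast, ← zpow_mul, ← zpow_mul, ← zpow_add₀ h0, ← zpow_add₀ h0, ← zpow_one_add₀ h0]
    congr 1; push_cast; ring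

lemma T22 {q : K} (h0 : q ≠ 0) (h1 : ‖q‖ < 1) :
    T2 q ^ 2 = 2 * (T2 (q ^ 2) * T3 (q ^ 2)) := by
  obtain ⟨h0', h1'⟩ := qsq h0 h1
  have s2 := T2_summable h0 h1
  have s3' := T3_summable h0' h1'
  have s2' := T2_summable h0' h1'
  have a := tprod_split s2 s2
  have b := tmulprod s2' s3'
  rw [sq (T2 q)]
  unfold T3 T2
  rw [a, b, two_mul]
  congr 1
  · refine tsum_congr fun p => ?_
    rw [← zpow_natCast, ← zpow_mul, ← zpow_mul, ← zpow_add₀ h0, ← zpow_add₀ h0]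
    congr 1; push_cast; ring
  · let e : ℤ × ℤ ≃ ℤ × ℤ := ⟨fun p => (p.2, p.1 + 1), fun p => (p.2 - 1, p.1),
      fun p => by simp, fun p => by simp⟩
    rw [← e.tsum_eq (fun p : ℤ × ℤ => (q ^ 2) ^ (p.1 * (p.1 + 1)) * (q ^ 2) ^ (p.2 ^ 2))]
    refine tsum_congr fun p => ?_
    change _ = (q ^ 2) ^ (p.2 * (p.2 + 1)) * (q ^ 2) ^ ((p.1 + 1) ^ 2)
    rw [← zpow_natCast, ← zpow_mul, ← zpow_mul, ← zpow_add₀ h0, ← zpow_add₀ h0]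
    congr 1; push_cast; ring

lemma T2_neg (q : K) : T2 (-q) = T2 q := by
  refine tsum_congr fun n => ?_
  exact (Int.even_mul_succ_self n).neg_zpow q

noncomputable def ZZ (q : K) : K := T3 q ^ 4
noncomputable def XX (q : K) : K := q * T2 q ^ 4

lemma jacobi_id {q : K} (h0 : q ≠ 0) (h1 : ‖q‖ < 1) : ZZ q = ZZ (-q) + XX q := by
  have a := T33 h0 h1
  have b := T33 (neg_ne_zero.mpr h0) (by rwa [norm_neg])
  have c := T22 h0 h1
  rw [neg_sq] at b
  unfold ZZ XX
  rw [show T3 q ^ 4 = (T3 q ^ 2) ^ 2 by ring, show T3 (-q) ^ 4 = (T3 (-q) ^ 2) ^ 2 by ring,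
    show T2 q ^ 4 = (T2 q ^ 2) ^ 2 by ring, a, b, c]
  ring

lemma XX_neg (q : K) : XX (-q) = - XX q := by
  unfold XX; rw [T2_neg]; ring

end thetaIds

noncomputable def pser (c : ℕ → ℝ) (x : ℝ) : ℝ := ∑' n : ℕ, c n * x ^ n

def dser (c : ℕ → ℝ) (n : ℕ) : ℝ := (n + 1) * c (n + 1)

lemma summ_poly (k : ℕ) {r : ℝ} (h0 : 0 ≤ r) (h1 : r < 1) :
    Summable (fun n : ℕ => ((n : ℝ) + 1) ^ k * r ^ n) := by
  have h := summable_pow_mul_geometric_of_norm_lt_one k (r := r) (by rwa [Real.norm_of_nonneg h0])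
  rcases h0.eq_or_lt with rfl | hr
  · refine summable_of_ne_finset_zero (s := {0}) ?_
    intro n hn
    simp at hn
    simp [hn]
  have h2 := ((summable_nat_add_iff 1).mpr h).mul_right r⁻¹
  refine h2.congr fun n => ?_
  push_cast
  rw [pow_succ r n]
  field_simp

def PB (c : ℕ → ℝ) : Prop := ∃ (C : ℝ) (k : ℕ), ∀ n, |c n| ≤ C * ((n : ℝ) + 1) ^ k

lemma pser_summable {c : ℕ → ℝ} (hc : PB c) {x : ℝ} (hx : |x| < 1) :
    Summable (fun n : ℕ => c n * x ^ n) := by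
  obtain ⟨C, k, hc⟩ := hc
  refine Summable.of_norm_bounded ((summ_poly k (abs_nonneg x) hx).mul_left C) fun n => ?_
  rw [norm_mul, norm_pow, Real.norm_eq_abs, Real.norm_eq_abs, ← mul_assoc]
  gcongr
  exact hc n

lemma PB.dser {c : ℕ → ℝ} (hc : PB c) : PB (dser c) := by
  obtain ⟨C, k, hc⟩ := hc
  refine ⟨C * 2 ^ k, k + 1, fun n => ?_⟩
  unfold _root_.dser
  rw [abs_mul, abs_of_nonneg (by positivity : (0:ℝ) ≤ (n:ℝ) + 1)]
  have hC : 0 ≤ C := by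
    have := (abs_nonneg _).trans (hc 0)
    simpa using this
  have h1 := hc (n + 1)
  have h2 : (((n + 1 : ℕ) : ℝ) + 1) ^ k ≤ (2 * ((n:ℝ) + 1)) ^ k := by
    gcongr; push_cast; linarith
  calc ((n:ℝ) + 1) * |c (n + 1)| ≤ ((n:ℝ) + 1) * (C * (2 * ((n:ℝ) + 1)) ^ k) := by
        gcongr; exact h1.trans (by gcongr)
    _ = _ := by rw [mul_pow]; ring

lemma pser_hasDerivAt {c : ℕ → ℝ} (hc : PB c) {x : ℝ} (hx : |x| < 1) :
    HasDerivAt (pser c) (pser (dser c) x) x := by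
  obtain ⟨r, hr1, hr2⟩ := exists_between hx
  have hr0 : 0 < r := (abs_nonneg x).trans_lt hr1
  have hcr : Summable (fun n : ℕ => |dser c n| * r ^ n) := by
    have := (pser_summable hc.dser (x := r) (by rwa [abs_of_pos hr0])).norm
    refine this.congr fun n => ?_
    rw [norm_mul, norm_pow, Real.norm_eq_abs, Real.norm_eq_abs, abs_of_pos hr0]
  have hu : Summable (fun n : ℕ => |c n| * (n * r ^ (n - 1))) := by
    rw [← summable_nat_add_iff 1]
    refine hcr.congr fun n => ?_
    unfold dser
    rw [abs_mul, abs_of_nonneg (by positivity : (0:ℝ) ≤ (n:ℝ) + 1)]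
    push_cast
    ring
  have hb : ∀ n : ℕ, ∀ y, |y| < r → ‖c n * (n * y ^ (n - 1))‖ ≤ |c n| * (n * r ^ (n - 1)) := by
    intro n y hy
    rw [norm_mul, norm_mul, norm_pow, Real.norm_eq_abs, Real.norm_eq_abs, Real.norm_eq_abs,
      abs_of_nonneg (by positivity : (0:ℝ) ≤ (n:ℝ))]
    gcongr
  have key := hasDerivAt_tsum_of_isPreconnected (𝕜 := ℝ) (g := fun (n : ℕ) (y : ℝ) => c n * y ^ n)
    (g' := fun (n : ℕ) (y : ℝ) => c n * (n * y ^ (n - 1))) (t := Metric.ball 0 r) (y₀ := x) (y := x)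
    hu Metric.isOpen_ball (convex_ball _ _).isPreconnected
    (fun n y _ => (hasDerivAt_pow n y).const_mul (c n)) (fun n y hy => hb n y (by simpa using hy))
    (by simpa using hr1) (pser_summable hc hx) (by simpa using hr1)
  have hs : Summable (fun n : ℕ => c n * (n * x ^ (n - 1))) :=
    Summable.of_norm_bounded hu fun n => hb n x hr1
  have he : pser (dser c) x = ∑' n : ℕ, c n * (n * x ^ (n - 1)) := by
    rw [hs.tsum_eq_zero_add]
    simp only [pser, dser]
    simp
    exact tsum_congr fun n => by ring
  rw [he]
  exact key

/-- hypergeometric coefficients -/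
noncomputable def hc (m : ℕ) : ℝ := poch (1/2) m * poch (1/2) m / poch 1 m / m.factorial

lemma poch_one (m : ℕ) : poch 1 m = m.factorial := by
  induction m with
  | zero => simp [poch]
  | succ m ih =>
    rw [poch, Finset.prod_range_succ, ← poch, ih, Nat.factorial_succ]; push_cast; ring

lemma hc_zero : hc 0 = 1 := by simp [hc, poch]

lemma hc_succ (m : ℕ) : ((m:ℝ) + 1) ^ 2 * hc (m + 1) = ((m:ℝ) + 1/2) ^ 2 * hc m := by
  have h : poch (1/2) (m + 1) = poch (1/2) m * (1/2 + m) := by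
    rw [poch, Finset.prod_range_succ, ← poch]
  have : ((m.factorial : ℕ) : ℝ) ≠ 0 := by exact_mod_cast m.factorial_ne_zero
  rw [hc, hc, h, poch_one, poch_one, Nat.factorial_succ]
  push_cast
  field_simp
  ring

lemma hc_bd (m : ℕ) : 0 ≤ hc m ∧ hc m ≤ 1 := by
  induction m with
  | zero => simp [hc_zero]
  | succ m ih =>
    have h := hc_succ m
    have e : hc (m + 1) = ((m:ℝ) + 1/2) ^ 2 / ((m:ℝ) + 1) ^ 2 * hc m := by
      field_simp; linarith
    have h1 : ((m:ℝ) + 1/2) ^ 2 / ((m:ℝ) + 1) ^ 2 ≤ 1 := by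
      rw [div_le_one (by positivity)]; gcongr; norm_num
    have h0 : 0 ≤ ((m:ℝ) + 1/2) ^ 2 / ((m:ℝ) + 1) ^ 2 := by positivity
    rw [e]
    exact ⟨mul_nonneg h0 ih.1, mul_le_one₀ h1 ih.1 ih.2⟩

lemma hc_PB : PB hc := ⟨1, 0, fun n => by simpa [abs_of_nonneg (hc_bd n).1] using (hc_bd n).2⟩

lemma hypF_eq (x : ℝ) : hypF (1/2) (1/2) 1 x = pser hc x := by
  unfold hypF pser hc
  exact tsum_congr fun n => by ring

lemma pser_zero (c : ℕ → ℝ) : pser c 0 = c 0 := by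
  unfold pser
  rw [tsum_eq_single 0]
  · simp
  · intro n hn; simp [hn]

lemma hs_congr {f g : ℕ → ℝ} {a : ℝ} (h : HasSum f a) (e : ∀ n, f n = g n) : HasSum g a :=
  (funext e) ▸ h

lemma pser_mul_x {c : ℕ → ℝ} (hc : PB c) {x : ℝ} (hx : |x| < 1) :
    HasSum (fun n : ℕ => (n : ℝ) * c n * x ^ n) (x * pser (dser c) x) := by
  have h := (pser_summable hc.dser hx).hasSum.mul_left x
  have h2 : HasSum (fun n : ℕ => ((n + 1 : ℕ) : ℝ) * c (n + 1) * x ^ (n + 1)) (x * pser (dser c) x) := by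
    refine hs_congr h fun n => ?_
    unfold dser; push_cast; ring
  have := (hasSum_nat_add_iff (f := fun n : ℕ => (n : ℝ) * c n * x ^ n) 1).mp h2
  simpa using this

lemma hyp_ode {x : ℝ} (hx : |x| < 1) :
    x * (1 - x) * pser (dser (dser hc)) x + (1 - 2 * x) * pser (dser hc) x - pser hc x / 4 = 0 := by
  have a := pser_mul_x hc_PB.dser hx
  have b := (pser_summable hc_PB.dser hx).hasSum
  have c := pser_mul_x hc_PB hx
  have d := (pser_summable hc_PB hx).hasSum
  have h1 : HasSum (fun n : ℕ => (n:ℝ) * (n - 1) * hc n * x ^ n) (x * (x * pser (dser (dser hc)) x)) := by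
    have h2 : HasSum (fun n : ℕ => ((n + 1 : ℕ) : ℝ) * ((n + 1 : ℕ) - 1) * hc (n + 1) * x ^ (n + 1))
        (x * (x * pser (dser (dser hc)) x)) := by
      refine hs_congr (a.mul_left x) fun n => ?_
      unfold dser; push_cast; ring
    have := (hasSum_nat_add_iff (f := fun n : ℕ => (n : ℝ) * (n - 1) * hc n * x ^ n) 1).mp h2
    simpa using this
  have h3 := (((a.sub h1).add b).sub (c.mul_left 2)).sub (d.mul_left (1/4))
  have z : HasSum (fun n : ℕ => (0:ℝ)) 0 := hasSum_zero
  have e := h3.unique (hs_congr z fun n => ?_)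
  · change _ + pser (dser hc) x - _ - 1 / 4 * pser hc x = 0 at e
    linarith
  · have := hc_succ n
    unfold dser
    linear_combination (-x ^ n) * this

lemma pser_hc_ge {x : ℝ} (h0 : 0 ≤ x) (h1 : x < 1) : 1 ≤ pser hc x := by
  have := (pser_summable hc_PB (x := x) (by rwa [abs_of_nonneg h0])).le_tsum 0
    (fun n _ => mul_nonneg (hc_bd n).1 (pow_nonneg h0 n))
  simpa [hc_zero, pser] using this

lemma landen {l : ℝ} (hl0 : 0 ≤ l) (hl1 : l < 1) :
    pser hc (4 * l / (1 + l) ^ 2) = (1 + l) * pser hc (l ^ 2) := by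
  set w : ℝ → ℝ := fun l => 4 * l / (1 + l) ^ 2 with hw
  set F := pser hc with hF
  set F1 := pser (dser hc) with hF1
  set F2 := pser (dser (dser hc)) with hF2
  have dF : ∀ x, |x| < 1 → HasDerivAt F (F1 x) x := fun x hx => pser_hasDerivAt hc_PB hx
  have dF1 : ∀ x, |x| < 1 → HasDerivAt F1 (F2 x) x := fun x hx => pser_hasDerivAt hc_PB.dser hx
  have ode : ∀ x, |x| < 1 → x * (1 - x) * F2 x + (1 - 2 * x) * F1 x - F x / 4 = 0 :=
    fun x hx => hyp_ode hx
  have wb : ∀ u, 0 ≤ u → u < 1 → |w u| < 1 := by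
    intro u h0 h1
    have : 0 ≤ w u := by simp only [hw]; positivity
    rw [abs_of_nonneg this]
    simp only [hw]
    rw [div_lt_one (by positivity)]
    nlinarith [mul_pos (sub_pos.mpr h1) (sub_pos.mpr h1)]
  have sb : ∀ u : ℝ, 0 ≤ u → u < 1 → |u ^ 2| < 1 := by
    intro u h0 h1
    rw [abs_of_nonneg (by positivity)]
    exact pow_lt_one₀ h0 h1 two_ne_zero
  have dw : ∀ u, 0 ≤ u → HasDerivAt w (4 * (1 - u) / (1 + u) ^ 3) u := by
    intro u h0
    have h1 : HasDerivAt (fun u : ℝ => 4 * u) 4 u := by simpa using (hasDerivAt_id u).const_mul 4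
    have h2 : HasDerivAt (fun u : ℝ => (1 + u) ^ 2) (2 * (1 + u)) u := by
      simpa using ((hasDerivAt_id u).const_add 1).fun_pow 2
    have := h1.div h2 (by positivity)
    convert! this using 1
    field_simp
    ring
  have dsq : ∀ u : ℝ, HasDerivAt (fun u : ℝ => u ^ 2) (2 * u) u := by
    intro u; simpa using hasDerivAt_pow 2 u
  have dinv : ∀ u : ℝ, 0 ≤ u → HasDerivAt (fun u : ℝ => (1 + u)⁻¹) (- 1 / (1 + u) ^ 2) u := by
    intro u h0
    exact ((hasDerivAt_id u).const_add 1).inv (by simp; positivity)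
  -- f, g and flux functions
  set f : ℝ → ℝ := fun u => F (w u) * (1 + u)⁻¹ with hf
  set g : ℝ → ℝ := fun u => F (u ^ 2) with hg
  set f' : ℝ → ℝ := fun u => F1 (w u) * (4 * (1 - u) / (1 + u) ^ 3) * (1 + u)⁻¹
    + F (w u) * (- 1 / (1 + u) ^ 2) with hf'
  set g' : ℝ → ℝ := fun u => F1 (u ^ 2) * (2 * u) with hg'
  have df : ∀ u, 0 ≤ u → u < 1 → HasDerivAt f (f' u) u := fun u h0 h1 =>
    ((dF _ (wb u h0 h1)).comp u (dw u h0)).mul (dinv u h0)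
  have dg : ∀ u, 0 ≤ u → u < 1 → HasDerivAt g (g' u) u := fun u h0 h1 =>
    HasDerivAt.comp (h₂ := F) (h := fun u : ℝ => u ^ 2) u (dF _ (sb u h0 h1)) (dsq u)
  set B : ℝ → ℝ := fun u => (2 * u ^ 2 * (1 - u ^ 2)) * F1 (u ^ 2) with hB
  set A : ℝ → ℝ := fun u => (w u * (1 - u) ^ 2 * (1 + u)⁻¹) * F1 (w u) - (u * (1 - u) * (1 + u)⁻¹) * F (w u) with hA
  have dB : ∀ u, 0 ≤ u → u < 1 → HasDerivAt B (u * g u) u := by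
    intro u h0 h1
    have h2 : HasDerivAt (fun u : ℝ => 2 * u ^ 2 * (1 - u ^ 2)) (2 * (2 * u) * (1 - u ^ 2) + 2 * u ^ 2 * (0 - 2 * u)) u :=
      ((dsq u).const_mul 2).mul ((hasDerivAt_const u 1).sub (dsq u))
    have := h2.mul (HasDerivAt.comp (h₂ := F1) (h := fun u : ℝ => u ^ 2) u (dF1 _ (sb u h0 h1)) (dsq u))
    convert! this using 1
    have o := ode _ (sb u h0 h1)
    simp only [hg, Function.comp]
    linear_combination (-4 * u) * o
  have dA : ∀ u, 0 ≤ u → u < 1 → HasDerivAt A (u * f u) u := by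
    intro u h0 h1
    have hm : HasDerivAt (fun u : ℝ => 1 - u) (-1) u := by
      simpa using (hasDerivAt_id u).const_sub 1
    have hm2 : HasDerivAt (fun u : ℝ => (1 - u) ^ 2) (2 * (1 - u) * (-1)) u := by
      simpa using hm.fun_pow 2
    have h2 := (((dw u h0).mul hm2).mul (dinv u h0)).mul ((dF1 _ (wb u h0 h1)).comp u (dw u h0))
    have h3 := (((hasDerivAt_id u).mul hm).mul (dinv u h0)).mul ((dF _ (wb u h0 h1)).comp u (dw u h0))
    have := h2.sub h3
    convert! this using 1
    have o := ode _ (wb u h0 h1)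
    have hu : (1 + u) ≠ 0 := by positivity
    simp only [hf, Function.comp, Pi.mul_apply, id]
    have hwu : w u = 4 * u / (1 + u) ^ 2 := rfl
    generalize F2 (w u) = a2 at *
    generalize F1 (w u) = a1 at *
    generalize F (w u) = a0 at *
    rw [hwu] at o ⊢
    linear_combination (norm := (field_simp; ring)) (-(4 * (1 - u) / (1 + u) ^ 2)) * o
  have rel : ∀ u, 0 ≤ u → A u = u * (1 - u ^ 2) * f' u ∧ B u = u * (1 - u ^ 2) * g' u := by
    intro u h0
    constructor
    · simp only [hA, hf', hw]
      field_simp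
      ring
    · simp only [hB, hg']; ring
  have V0 : ∀ u, 0 ≤ u → u < 1 → A u * g u - f u * B u = 0 := by
    intro u h0 h1
    have dV : ∀ v, 0 ≤ v → v < 1 → HasDerivAt (fun u => A u * g u - f u * B u) 0 v := by
      intro v hv0 hv1
      have := ((dA v hv0 hv1).mul (dg v hv0 hv1)).sub ((df v hv0 hv1).mul (dB v hv0 hv1))
      convert! this using 1
      rw [(rel v hv0).1, (rel v hv0).2]; ring
    have := constant_of_has_deriv_right_zero (f := fun u => A u * g u - f u * B u) (a := 0) (b := u)
      (fun v hv => (dV v hv.1 (hv.2.trans_lt h1)).continuousAt.continuousWithinAt)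
      (fun v hv => (dV v hv.1 (hv.2.trans h1)).hasDerivWithinAt) u ⟨h0, le_rfl⟩
    rw [this]
    simp [hA, hB, hw]
  have gpos : ∀ u, 0 ≤ u → u < 1 → 1 ≤ g u := fun u h0 h1 =>
    pser_hc_ge (by positivity) (pow_lt_one₀ h0 h1 two_ne_zero)
  have F10 : F1 0 = 1 / 4 := by
    have := hc_succ 0
    rw [hF1, pser_zero, dser]
    norm_num [hc_zero] at this ⊢
    linarith
  have F0 : F 0 = 1 := by rw [hF, pser_zero, hc_zero]
  have dR : ∀ v, 0 ≤ v → v < 1 → HasDerivAt (fun u => f u / g u) 0 v := by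
    intro v h0 h1
    have hgv := gpos v h0 h1
    have := (df v h0 h1).div (dg v h0 h1) (by positivity)
    convert! this using 1
    have : f' v * g v - f v * g' v = 0 := by
      rcases h0.eq_or_lt with rfl | hv
      · simp [hf', hg', hf, hg, hw, F0, F10]
      · have h := V0 v h0 h1
        rw [(rel v h0).1, (rel v h0).2] at h
        have h' : (v * (1 - v ^ 2)) * (f' v * g v - f v * g' v) = 0 := by linarith
        have : v * (1 - v ^ 2) ≠ 0 := by
          have := pow_lt_one₀ h0 h1 two_ne_zero
          exact mul_ne_zero hv.ne' (by linarith)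
        exact (mul_eq_zero.mp h').resolve_left this
    rw [this, zero_div]
  have := constant_of_has_deriv_right_zero (f := fun u => f u / g u) (a := 0) (b := l)
      (fun v hv => (dR v hv.1 (hv.2.trans_lt hl1)).continuousAt.continuousWithinAt)
      (fun v hv => (dR v hv.1 (hv.2.trans hl1)).hasDerivWithinAt) l ⟨hl0, le_rfl⟩
  have hgl := gpos l hl0 hl1
  have e0 : f 0 / g 0 = 1 := by simp [hf, hg, hw, F0]
  rw [e0, div_eq_one_iff_eq (by positivity)] at this
  simp only [hf, hg, hw] at this
  rw [← this]
  field_simp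

section CC
open Complex

lemma T3_eq (τ : ℂ) : T3 (cexp (Real.pi * I * τ)) = jacobiTheta τ := by
  unfold T3 jacobiTheta
  refine tsum_congr fun n => ?_
  rw [← Complex.exp_int_mul]; congr 1; push_cast; ring

lemma neg_exp (τ : ℂ) : - cexp (Real.pi * I * τ) = cexp (Real.pi * I * (τ + 1)) := by
  rw [mul_add, Complex.exp_add, mul_one, Complex.exp_pi_mul_I]; ring

lemma T3n_eq (τ : ℂ) : T3 (- cexp (Real.pi * I * τ)) = jacobiTheta₂ (1 / 2) τ := by
  rw [neg_exp]
  unfold T3 jacobiTheta₂ jacobiTheta₂_term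
  refine tsum_congr fun n => ?_
  rw [← Complex.exp_int_mul, Complex.exp_eq_exp_iff_exists_int]
  obtain ⟨k, hk⟩ := Int.even_mul_pred_self n
  refine ⟨k, ?_⟩
  have hk' : (n : ℂ) * (n - 1) = k + k := by exact_mod_cast hk
  push_cast
  linear_combination (Real.pi * I) * hk'

lemma T2_eq (τ : ℂ) : T2 (cexp (Real.pi * I * τ)) = jacobiTheta₂ (τ / 2) τ := by
  unfold T2 jacobiTheta₂ jacobiTheta₂_term
  refine tsum_congr fun n => ?_
  rw [← Complex.exp_int_mul]; congr 1; push_cast; ring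

lemma cpow_half4 (u : ℂ) : ((u ^ (1 / 2 : ℂ)) ^ 4) = u ^ 2 := by
  have : (u ^ (1 / 2 : ℂ)) ^ 2 = u := by
    rw [one_div]; exact Complex.cpow_ofNat_inv_pow u 2
  calc _ = ((u ^ (1 / 2 : ℂ)) ^ 2) ^ 2 := by ring
    _ = _ := by rw [this]

lemma ZZ_S {τ : ℂ} (hτ : τ ≠ 0) :
    ZZ (cexp (Real.pi * I * (-1 / τ))) = - τ ^ 2 * ZZ (cexp (Real.pi * I * τ)) := by
  unfold ZZ
  rw [T3_eq, T3_eq, jacobiTheta_eq_jacobiTheta₂ τ, jacobiTheta₂_functional_equation,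
    mul_pow, mul_pow, div_pow, cpow_half4, jacobiTheta_eq_jacobiTheta₂]
  simp only [mul_pow, neg_sq, I_sq]
  simp
  field_simp

lemma ZZ_S' {τ : ℂ} (hτ : τ ≠ 0) :
    XX (cexp (Real.pi * I * (-1 / τ))) = - τ ^ 2 * ZZ (- cexp (Real.pi * I * τ)) := by
  unfold ZZ XX
  rw [T3n_eq, jacobiTheta₂_functional_equation, T2_eq,
    mul_pow, mul_pow, div_pow, cpow_half4, ← Complex.exp_nat_mul, 
    show (1 / 2 / τ : ℂ) = - ((-1 / τ) / 2) by field_simp, jacobiTheta₂_neg_left,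
    show (((4 : ℕ) : ℂ) * (-Real.pi * I * (1 / 2) ^ 2 / τ)) = Real.pi * I * (-1 / τ) by push_cast; ring]
  simp only [mul_pow, neg_sq, I_sq]
  field_simp

lemma norm_q_lt {τ : ℂ} (h : 0 < τ.im) : ‖cexp (Real.pi * I * τ)‖ < 1 := by
  rw [Complex.norm_exp]
  simp
  positivity

end CC

section CC2
open Complex Filter Topology

lemma castT3 (r : ℝ) : ((T3 r : ℝ) : ℂ) = T3 (r : ℂ) := by
  unfold T3; rw [Complex.ofReal_tsum]; refine tsum_congr fun n => ?_; push_cast; rfl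
lemma castT2 (r : ℝ) : ((T2 r : ℝ) : ℂ) = T2 (r : ℂ) := by
  unfold T2; rw [Complex.ofReal_tsum]; refine tsum_congr fun n => ?_; push_cast; rfl
lemma castZZ (r : ℝ) : ((ZZ r : ℝ) : ℂ) = ZZ (r : ℂ) := by
  unfold ZZ; push_cast [castT3]; rfl
lemma castXX (r : ℝ) : ((XX r : ℝ) : ℂ) = XX (r : ℂ) := by
  unfold XX; push_cast [castT2]; rfl

noncomputable def qq (t : ℝ) : ℝ := Real.exp (-(Real.pi * t))
lemma qq_pos (t : ℝ) : 0 < qq t := Real.exp_pos _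
lemma qq_lt {t : ℝ} (h : 0 < t) : qq t < 1 := by
  unfold qq; rw [Real.exp_lt_one_iff]; have := Real.pi_pos; nlinarith
lemma qq_cast (t : ℝ) : ((qq t : ℝ) : ℂ) = cexp (Real.pi * I * (I * t)) := by
  unfold qq; push_cast; congr 1
  linear_combination (- (Real.pi * t : ℂ)) * I_sq
lemma qq_surj {q : ℝ} (h0 : 0 < q) (h1 : q < 1) : ∃ t, 0 < t ∧ qq t = q := by
  have := Real.log_neg h0 h1
  have hp := Real.pi_pos
  refine ⟨- Real.log q / Real.pi, by apply div_pos <;> linarith, ?_⟩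
  unfold qq
  rw [show -(Real.pi * (-Real.log q / Real.pi)) = Real.log q by field_simp, Real.exp_log h0]

lemma nrm {q : ℝ} (h0 : 0 < q) (h1 : q < 1) : q ≠ 0 ∧ ‖q‖ < 1 :=
  ⟨h0.ne', by rwa [Real.norm_eq_abs, abs_of_pos h0]⟩

lemma T3_ge {q : ℝ} (h0 : 0 < q) (h1 : q < 1) : 1 ≤ T3 q := by
  have hs := (T3_summable (nrm h0 h1).1 (nrm h0 h1).2).of_norm
  have := hs.le_tsum 0 (fun j _ => by positivity)
  simpa [T3] using this
lemma T2_ge {q : ℝ} (h0 : 0 < q) (h1 : q < 1) : 1 ≤ T2 q := by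
  have hs := (T2_summable (nrm h0 h1).1 (nrm h0 h1).2).of_norm
  have := hs.le_tsum 0 (fun j _ => by positivity)
  simpa [T2] using this

lemma arg_S {t : ℝ} (ht : 0 < t) : (-1 / (I * t) : ℂ) = I * ((1 / t : ℝ) : ℂ) := by
  have : (t : ℂ) ≠ 0 := by exact_mod_cast ht.ne'
  push_cast; field_simp; simp

lemma ZZ_inv {t : ℝ} (ht : 0 < t) : ZZ (qq (1 / t)) = t ^ 2 * ZZ (qq t) := by
  have ht' : (t : ℂ) ≠ 0 := by exact_mod_cast ht.ne'
  have := ZZ_S (τ := I * t) (by simp [ht'])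
  rw [arg_S ht, ← qq_cast, ← qq_cast, ← castZZ, ← castZZ, mul_pow, I_sq] at this
  have h2 : ((ZZ (qq (1 / t)) : ℝ) : ℂ) = ((t ^ 2 * ZZ (qq t) : ℝ) : ℂ) := by
    rw [this]; push_cast; ring
  exact_mod_cast h2
lemma XX_inv {t : ℝ} (ht : 0 < t) : XX (qq (1 / t)) = t ^ 2 * ZZ (-qq t) := by
  have ht' : (t : ℂ) ≠ 0 := by exact_mod_cast ht.ne'
  have := ZZ_S' (τ := I * t) (by simp [ht'])
  rw [arg_S ht, ← qq_cast, ← qq_cast, ← castXX, ← ofReal_neg, ← castZZ, mul_pow, I_sq] at this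
  have h2 : ((XX (qq (1 / t)) : ℝ) : ℂ) = ((t ^ 2 * ZZ (-qq t) : ℝ) : ℂ) := by
    rw [this]; push_cast; ring
  exact_mod_cast h2

lemma XX_pos {q : ℝ} (h0 : 0 < q) (h1 : q < 1) : 0 < XX q := by
  have := T2_ge h0 h1
  unfold XX; positivity
lemma ZZ_pos {q : ℝ} (h0 : 0 < q) (h1 : q < 1) : 0 < ZZ q := by
  have := T3_ge h0 h1
  unfold ZZ; positivity
lemma ZZn_pos {q : ℝ} (h0 : 0 < q) (h1 : q < 1) : 0 < ZZ (-q) := by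
  obtain ⟨t, ht, rfl⟩ := qq_surj h0 h1
  have h := XX_inv ht
  have h2 := XX_pos (qq_pos (1 / t)) (qq_lt (by positivity))
  rw [h] at h2
  exact pos_of_mul_pos_right h2 (by positivity)

noncomputable def xq (q : ℝ) : ℝ := XX q / ZZ q
lemma xq_mem {q : ℝ} (h0 : 0 < q) (h1 : q < 1) : 0 < xq q ∧ xq q < 1 := by
  have := XX_pos h0 h1
  have h2 := ZZ_pos h0 h1
  have h3 := ZZn_pos h0 h1
  have h4 := jacobi_id (nrm h0 h1).1 (nrm h0 h1).2
  unfold xq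
  exact ⟨by positivity, by rw [div_lt_one h2]; linarith⟩
lemma one_sub_xq {q : ℝ} (h0 : 0 < q) (h1 : q < 1) : 1 - xq q = ZZ (-q) / ZZ q := by
  have h2 := ZZ_pos h0 h1
  have h4 := jacobi_id (nrm h0 h1).1 (nrm h0 h1).2
  unfold xq; field_simp; linarith

lemma xq_inv {t : ℝ} (ht : 0 < t) : xq (qq (1 / t)) = 1 - xq (qq t) := by
  rw [one_sub_xq (qq_pos t) (qq_lt ht), xq, ZZ_inv ht, XX_inv ht]
  field_simp

lemma landen_step {q : ℝ} (h0 : 0 < q) (h1 : q < 1) :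
    T3 q ^ 2 * pser hc (xq (q ^ 2)) = T3 (q ^ 2) ^ 2 * pser hc (xq q) := by
  obtain ⟨hn0, hn1⟩ := nrm h0 h1
  have hq0 : 0 < q ^ 2 := by positivity
  have hq1 : q ^ 2 < 1 := by nlinarith
  have hA := T3_ge hq0 hq1
  have hB := T2_ge hq0 hq1
  have h33 := T33 hn0 hn1
  have h22 := T22 hn0 hn1
  have h33n := T33 (q := -q) (by simpa using hn0) (by simpa using hn1)
  rw [neg_sq] at h33n
  have hzn := ZZn_pos h0 h1
  have hA0 : T3 (q ^ 2) ≠ 0 := by linarith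
  set A := T3 (q ^ 2) with hAd
  set B := T2 (q ^ 2) with hBd
  have hlt : q * B ^ 2 < A ^ 2 := by
    by_contra hcon
    have : T3 (-q) ^ 2 = 0 := le_antisymm (by rw [h33n]; nlinarith) (sq_nonneg _)
    have h' : ZZ (-q) = 0 := by
      unfold ZZ; rw [show T3 (-q) ^ 4 = (T3 (-q) ^ 2) ^ 2 by ring, this]; ring
    linarith
  have hl0 : 0 ≤ q * B ^ 2 / A ^ 2 := by positivity
  have hl1 : q * B ^ 2 / A ^ 2 < 1 := by rw [div_lt_one (by positivity)]; exact hlt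
  have hl := landen hl0 hl1
  have e1 : (q * B ^ 2 / A ^ 2) ^ 2 = xq (q ^ 2) := by
    unfold xq XX ZZ; rw [← hAd, ← hBd]; field_simp
  have hpos : 0 < A ^ 2 + q * B ^ 2 := by positivity
  have e2 : 4 * (q * B ^ 2 / A ^ 2) / (1 + q * B ^ 2 / A ^ 2) ^ 2 = xq q := by
    unfold xq XX ZZ
    rw [show T3 q ^ 4 = (T3 q ^ 2) ^ 2 by ring, show T2 q ^ 4 = (T2 q ^ 2) ^ 2 by ring, h33, h22]
    field_simp
    norm_num
  rw [e1, e2] at hl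
  rw [hl, h33]
  field_simp

lemma T3_bd {t : ℝ} (ht : 0 < t) : |T3 (qq t) - 1| ≤ 2 / (1 - qq t) * qq t := by
  have h := norm_jacobiTheta_sub_one_le (τ := I * t) (by simpa using ht)
  rw [← T3_eq, ← qq_cast, ← castT3, ← ofReal_one, ← ofReal_sub, norm_real] at h
  simpa [qq] using h
lemma T3n_bd {t : ℝ} (ht : 0 < t) : |T3 (-qq t) - 1| ≤ 2 / (1 - qq t) * qq t := by
  have h := norm_jacobiTheta_sub_one_le (τ := I * t + 1) (by simpa using ht)
  rw [← T3_eq, ← neg_exp, ← qq_cast, ← ofReal_neg, ← castT3, ← ofReal_one, ← ofReal_sub, norm_real] at h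
  simpa [qq] using h

lemma bd_lim : Tendsto (fun q : ℝ => 2 / (1 - q) * q) (𝓝 0) (𝓝 0) := by
  have : ContinuousAt (fun q : ℝ => 2 / (1 - q) * q) 0 := by
    refine ContinuousAt.mul (ContinuousAt.div (by fun_prop) (by fun_prop) (by norm_num)) (by fun_prop)
  simpa [ContinuousAt] using this
lemma T3_lim : Tendsto (fun q : ℝ => T3 q) (𝓝[>] 0) (𝓝 1) := by
  rw [tendsto_iff_norm_sub_tendsto_zero]
  refine squeeze_zero' (Eventually.of_forall fun _ => norm_nonneg _) ?_
    (bd_lim.mono_left nhdsWithin_le_nhds)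
  filter_upwards [Ioo_mem_nhdsGT (show (0:ℝ) < 1 by norm_num)] with q hq
  obtain ⟨t, ht, rfl⟩ := qq_surj hq.1 hq.2
  exact T3_bd ht
lemma T3n_lim : Tendsto (fun q : ℝ => T3 (-q)) (𝓝[>] 0) (𝓝 1) := by
  rw [tendsto_iff_norm_sub_tendsto_zero]
  refine squeeze_zero' (Eventually.of_forall fun _ => norm_nonneg _) ?_
    (bd_lim.mono_left nhdsWithin_le_nhds)
  filter_upwards [Ioo_mem_nhdsGT (show (0:ℝ) < 1 by norm_num)] with q hq
  obtain ⟨t, ht, rfl⟩ := qq_surj hq.1 hq.2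
  exact T3n_bd ht
lemma xq_lim : Tendsto xq (𝓝[>] 0) (𝓝 0) := by
  have h : Tendsto (fun q : ℝ => 1 - T3 (-q) ^ 4 / T3 q ^ 4) (𝓝[>] 0) (𝓝 (1 - 1 ^ 4 / 1 ^ 4)) :=
    tendsto_const_nhds.sub ((T3n_lim.pow 4).div (T3_lim.pow 4) (by norm_num))
  norm_num at h
  refine h.congr' ?_
  filter_upwards [Ioo_mem_nhdsGT (show (0:ℝ) < 1 by norm_num)] with q hq
  have := one_sub_xq hq.1 hq.2
  unfold ZZ at this
  linarith

lemma inversion {q : ℝ} (h0 : 0 < q) (h1 : q < 1) : T3 q ^ 2 = pser hc (xq q) := by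
  have hF : ∀ {q : ℝ}, 0 < q → q < 1 → 1 ≤ pser hc (xq q) := fun h0 h1 =>
    pser_hc_ge (xq_mem h0 h1).1.le (xq_mem h0 h1).2
  have hr : ∀ n : ℕ, 0 < q ^ (2 ^ n) ∧ q ^ (2 ^ n) < 1 := fun n =>
    ⟨by positivity, pow_lt_one₀ h0.le h1 (by positivity)⟩
  have hconst : ∀ n : ℕ, T3 (q ^ (2 ^ n)) ^ 2 / pser hc (xq (q ^ (2 ^ n))) =
      T3 q ^ 2 / pser hc (xq q) := by
    intro n
    induction n with
    | zero => simp
    | succ n ih =>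
      rw [← ih]
      have h := landen_step (hr n).1 (hr n).2
      have a1 := hF (hr n).1 (hr n).2
      have a2 := hF (hr (n+1)).1 (hr (n+1)).2
      rw [← pow_mul, ← pow_succ] at h
      rw [div_eq_div_iff (by linarith) (by linarith)]
      exact h.symm
  have hq : Tendsto (fun n : ℕ => q ^ (2 ^ n)) atTop (𝓝[>] 0) := by
    rw [tendsto_nhdsWithin_iff]
    refine ⟨(tendsto_pow_atTop_nhds_zero_of_lt_one h0.le h1).comp
      (tendsto_pow_atTop_atTop_of_one_lt (by norm_num)), Eventually.of_forall fun n => (hr n).1⟩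
  have hFc : Tendsto (pser hc) (𝓝 0) (𝓝 1) := by
    have := (pser_hasDerivAt hc_PB (x := 0) (by norm_num)).continuousAt
    rwa [ContinuousAt, pser_zero, hc_zero] at this
  have hlim : Tendsto (fun n : ℕ => T3 (q ^ (2 ^ n)) ^ 2 / pser hc (xq (q ^ (2 ^ n)))) atTop
      (𝓝 (1 ^ 2 / 1)) :=
    ((T3_lim.comp hq).pow 2).div (hFc.comp (xq_lim.comp hq)) (by norm_num)
  simp only [hconst] at hlim
  have h := tendsto_nhds_unique hlim tendsto_const_nhds
  have := hF h0 h1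
  have h3 : T3 q ^ 2 / pser hc (xq q) = 1 := by rw [← h]; norm_num
  rwa [div_eq_one_iff_eq (by linarith)] at h3

lemma ratio {t : ℝ} (ht : 0 < t) : pser hc (1 - xq (qq t)) = t * pser hc (xq (qq t)) := by
  have ht' : 0 < 1 / t := by positivity
  rw [← xq_inv ht, ← inversion (qq_pos _) (qq_lt ht'), ← inversion (qq_pos _) (qq_lt ht)]
  have h := ZZ_inv ht
  unfold ZZ at h
  have : (T3 (qq (1 / t)) ^ 2) ^ 2 = (t * T3 (qq t) ^ 2) ^ 2 := by rw [← pow_mul, h]; ring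
  exact (pow_left_inj₀ (by positivity) (by positivity) (by norm_num)).1 this

lemma xq_cont : ContinuousOn (fun t => xq (qq t)) (Set.Ioi 0) := by
  have hc1 : ContinuousOn (fun t => T3 (qq t)) (Set.Ioi 0) := by
    have h : ContinuousOn (fun t : ℝ => (jacobiTheta (I * t)).re) (Set.Ioi 0) := by
      intro t ht
      have h1 : ContinuousAt jacobiTheta (I * t) :=
        continuousAt_jacobiTheta (by simpa using ht)
      have h2 : ContinuousAt (fun t : ℝ => jacobiTheta (I * t)) t :=
        ContinuousAt.comp (f := fun t : ℝ => (I * t : ℂ)) h1 (by fun_prop)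
      exact (continuous_re.continuousAt.comp h2).continuousWithinAt
    refine h.congr fun t _ => ?_
    simp only
    rw [← T3_eq, ← qq_cast, ← castT3, ofReal_re]
  have hc2 : ContinuousOn (fun t => T3 (-qq t)) (Set.Ioi 0) := by
    have h : ContinuousOn (fun t : ℝ => (jacobiTheta (I * t + 1)).re) (Set.Ioi 0) := by
      intro t ht
      have h1 : ContinuousAt jacobiTheta (I * t + 1) :=
        continuousAt_jacobiTheta (by simpa using ht)
      have h2 : ContinuousAt (fun t : ℝ => jacobiTheta (I * t + 1)) t :=
        ContinuousAt.comp (f := fun t : ℝ => (I * t + 1 : ℂ)) h1 (by fun_prop)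
      exact (continuous_re.continuousAt.comp h2).continuousWithinAt
    refine h.congr fun t _ => ?_
    simp only
    rw [← T3_eq, ← neg_exp, ← qq_cast, ← ofReal_neg, ← castT3, ofReal_re]
  have h : ContinuousOn (fun t => 1 - T3 (-qq t) ^ 4 / T3 (qq t) ^ 4) (Set.Ioi 0) := by
    refine continuousOn_const.sub ((hc2.pow 4).div (hc1.pow 4) fun t ht => ?_)
    exact (ZZ_pos (qq_pos t) (qq_lt ht)).ne'
  refine h.congr fun t ht => ?_
  have := one_sub_xq (qq_pos t) (qq_lt ht)
  unfold ZZ at this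
  simp only
  linarith

lemma xq_surj {x : ℝ} (h0 : 0 < x) (h1 : x < 1) : ∃ t, 0 < t ∧ xq (qq t) = x := by
  have key : ∀ e > 0, ∃ t, 0 < t ∧ xq (qq t) < e := by
    intro e he
    have := (xq_lim.eventually (gt_mem_nhds he)).and
      (Ioo_mem_nhdsGT (show (0:ℝ) < 1 by norm_num))
    obtain ⟨q, hq, hq'⟩ := this.exists
    obtain ⟨t, ht, rfl⟩ := qq_surj hq'.1 hq'.2
    exact ⟨t, ht, hq⟩
  obtain ⟨a, ha, hax⟩ := key x h0
  obtain ⟨b, hb, hbx⟩ := key (1 - x) (by linarith)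
  have hb' : 0 < 1 / b := by positivity
  have hbx' : x < xq (qq (1 / b)) := by rw [xq_inv hb]; linarith
  obtain ⟨t, ht, e⟩ := isPreconnected_Ioi.intermediate_value (s := Set.Ioi (0:ℝ)) ha hb' xq_cont
    ⟨hax.le, hbx'.le⟩
  exact ⟨t, ht, e⟩

/-- Parametrisation of the elliptic data by the nome. -/
lemma param {x : ℝ} (h0 : 0 < x) (h1 : x < 1) : ∃ t, 0 < t ∧ x = XX (qq t) / ZZ (qq t) ∧
    1 - x = ZZ (-qq t) / ZZ (qq t) ∧ zEll x ^ 2 = ZZ (qq t) ∧ yEll x = Real.pi * t := by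
  obtain ⟨t, ht, rfl⟩ := xq_surj h0 h1
  refine ⟨t, ht, rfl, one_sub_xq (qq_pos t) (qq_lt ht), ?_, ?_⟩
  · unfold zEll Kell
    rw [hypF_eq, ← inversion (qq_pos t) (qq_lt ht)]
    have := Real.pi_ne_zero
    unfold ZZ
    field_simp
  · unfold yEll Kell
    rw [hypF_eq, hypF_eq, ratio ht]
    have := pser_hc_ge h0.le h1
    have h3 := Real.pi_ne_zero
    field_simp

end CC2

section DD
open Function Complex SlashInvariantForm MatrixGroups Filter
open UpperHalfPlane hiding I
open scoped Real Topology ModularForm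

noncomputable def f4 (τ : ℂ) : ℂ :=
  (jacobiTheta τ ^ 4) ^ 2 - jacobiTheta τ ^ 4 * jacobiTheta (τ + 1) ^ 4 + (jacobiTheta (τ + 1) ^ 4) ^ 2

lemma f4_eq (τ : ℂ) : f4 τ = ZZ (cexp (Real.pi * I * τ)) ^ 2
    - ZZ (cexp (Real.pi * I * τ)) * ZZ (-cexp (Real.pi * I * τ)) + ZZ (-cexp (Real.pi * I * τ)) ^ 2 := by
  unfold ZZ f4
  rw [← T3_eq, ← T3_eq, neg_exp]

lemma f4_T (τ : ℂ) : f4 (τ + 1) = f4 τ := by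
  unfold f4
  rw [show τ + 1 + 1 = 2 + τ by ring, jacobiTheta_two_add]
  ring

lemma im_S {τ : ℂ} (h : 0 < τ.im) : 0 < (-1 / τ).im := by
  have h0 : τ ≠ 0 := by rintro rfl; simp at h
  rw [neg_div, one_div, neg_im, inv_im]
  have : 0 < normSq τ := normSq_pos.2 h0
  rw [neg_div, neg_neg]
  positivity

lemma f4_S {τ : ℂ} (h : 0 < τ.im) : f4 (-1 / τ) = τ ^ 4 * f4 τ := by
  have h0 : τ ≠ 0 := by rintro rfl; simp at h
  rw [f4_eq, f4_eq]
  have h1 := jacobi_id (Complex.exp_ne_zero _) (norm_q_lt (im_S h))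
  rw [ZZ_S h0, ZZ_S' h0] at h1
  have h2 : ZZ (-cexp (Real.pi * I * (-1 / τ))) = -τ ^ 2 * (ZZ (cexp (Real.pi * I * τ)) - ZZ (-cexp (Real.pi * I * τ))) := by
    linear_combination -h1
  rw [h2, ZZ_S h0]
  ring

lemma f4_diff {τ : ℂ} (h : 0 < τ.im) : DifferentiableAt ℂ f4 τ := by
  have h1 := differentiableAt_jacobiTheta h
  have h2 : DifferentiableAt ℂ (fun τ => jacobiTheta (τ + 1)) τ :=
    DifferentiableAt.comp (f := fun τ : ℂ => τ + 1) τ (differentiableAt_jacobiTheta (by simpa using h)) (by fun_prop)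
  unfold f4
  fun_prop

lemma jt_lim (c : ℂ) (hc : c.im = 0) : Tendsto (fun τ : ℍ => jacobiTheta (τ + c)) atImInfty (𝓝 1) := by
  rw [tendsto_iff_norm_sub_tendsto_zero]
  have hb := bd_lim
  have hq : Tendsto (fun τ : ℍ => rexp (-π * τ.im)) atImInfty (𝓝 0) := by
    refine Real.tendsto_exp_atBot.comp ?_
    refine Tendsto.const_mul_atTop_of_neg (by simp [Real.pi_pos]) ?_
    exact tendsto_comap
  refine squeeze_zero (fun _ => norm_nonneg _) (fun τ => ?_) (bd_lim.comp hq)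
  have h := norm_jacobiTheta_sub_one_le (τ := (τ : ℂ) + c) (by simpa [hc] using τ.im_pos)
  simpa [hc] using h

lemma f4_lim : Tendsto (fun τ : ℍ => f4 τ) atImInfty (𝓝 1) := by
  have h1 := jt_lim 0 (by simp)
  have h2 := jt_lim 1 (by simp)
  simp only [add_zero] at h1
  have := (((h1.pow 4).pow 2).sub ((h1.pow 4).mul (h2.pow 4))).add ((h2.pow 4).pow 2)
  simpa [f4] using this

lemma f4_S_inv : ((fun τ : ℍ => f4 τ) ∣[(4 : ℤ)] ModularGroup.S) = fun τ : ℍ => f4 τ := by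
  ext z
  have := f4_S z.2
  have h0 := z.ne_zero
  have hd : denom ModularGroup.S z = z := ModularGroup.denom_S z
  rw [ModularForm.SL_slash_apply, UpperHalfPlane.modular_S_smul, hd]
  simp only
  rw [show (-(z:ℂ))⁻¹ = -1 / z by field_simp]
  rw [show f4 (-1 / (z:ℂ)) = _ from this]
  rw [zpow_neg]
  norm_cast
  change (z:ℂ) ^ 4 * f4 z * ((z:ℂ) ^ 4)⁻¹ = f4 z
  field_simp

lemma f4_T_inv : ((fun τ : ℍ => f4 τ) ∣[(4 : ℤ)] ModularGroup.T) = fun τ : ℍ => f4 τ := by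
  ext z
  have hd : denom ModularGroup.T z = 1 := by rw [ModularGroup.denom_apply]; simp [ModularGroup.coe_T]
  rw [ModularForm.SL_slash_apply, hd, modular_T_smul]
  simp
  rw [add_comm, f4_T]

noncomputable def F4 : ModularForm 𝒮ℒ 4 where
  toFun := fun τ : ℍ => f4 τ
  slash_action_eq' A hA := by
    obtain ⟨A, rfl⟩ := hA
    exact slash_action_generators_SL2Z f4_S_inv f4_T_inv A
  holo' := by
    rw [UpperHalfPlane.mdifferentiable_iff]
    refine .congr (f := f4) (fun z hz ↦ (f4_diff hz).differentiableWithinAt) fun z hz ↦ ?_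
    simp [ofComplex_apply_of_im_pos hz]
  bdd_at_cusps' hc := by
    rw [Subgroup.IsArithmetic.isCusp_iff_isCusp_SL2Z] at hc
    rw [OnePoint.isBoundedAt_iff_forall_SL2Z hc]
    intro γ _
    rw [slash_action_generators_SL2Z f4_S_inv f4_T_inv]
    exact f4_lim.isBigO_one ℝ

lemma f4_E4 (τ : ℍ) : f4 τ = ModularForm.E (k := 4) (by norm_num) τ := by
  have hne := EisensteinSeries.E_ne_zero (k := 4) (by norm_num) ⟨2, rfl⟩
  obtain ⟨c, hc⟩ := (finrank_eq_one_iff_of_nonzero' _ hne).mp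
    (Module.rank_eq_one_iff_finrank_eq_one.mp ModularForm.levelOne_weight_four_rank_one) F4
  have hE := EisensteinSeries.E_qExpansion_coeff_zero (k := 4) (by norm_num) ⟨2, rfl⟩
  have h1 : (UpperHalfPlane.qExpansion 1 F4).coeff 0 = valueAtInfty F4 :=
    UpperHalfPlane.qExpansion_coeff_zero one_pos
      (ModularFormClass.analyticAt_cuspFunction_zero F4 one_pos one_mem_strictPeriods_SL)
      (SlashInvariantFormClass.periodic_comp_ofComplex F4 one_mem_strictPeriods_SL)
  have h2 : valueAtInfty F4 = 1 := f4_lim.limUnder_eq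
  rw [h2, ← hc, FunLike.coe_smul, ModularForm.qExpansion_smul one_pos one_mem_strictPeriods_SL, PowerSeries.coeff_smul, hE] at h1
  have hc1 : c = 1 := by simpa using h1
  rw [hc1, one_smul] at hc
  rw [hc]
  rfl
end DD

section EE
open Complex EisensteinSeries
open UpperHalfPlane hiding I
open scoped Real Nat ArithmeticFunction.sigma

noncomputable def GG (k : ℕ) (τ : ℂ) : ℂ := ∑' p : ℤ × ℤ, (((p.1 : ℂ) * τ + p.2) ^ k)⁻¹
noncomputable def Goo (k : ℕ) (τ : ℂ) : ℂ :=
  ∑' p : ℤ × ℤ, (((2 * p.1 + 1 : ℂ) * τ + (2 * p.2 + 1)) ^ k)⁻¹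

lemma GG_summable {k : ℕ} (hk : 3 ≤ k) (z : ℍ) :
    Summable fun p : ℤ × ℤ => (((p.1 : ℂ) * (z : ℂ) + p.2) ^ k)⁻¹ := by
  refine (summable_prod_eisSummand hk z).congr fun p => ?_
  simp [eisSummand]

lemma GG_eq {k : ℕ} (_hk : 3 ≤ k) (z : ℍ) : GG k z = ∑' v : Fin 2 → ℤ, eisSummand k v z := by
  rw [← (finTwoArrowEquiv ℤ).symm.tsum_eq, GG]
  refine tsum_congr fun p => ?_
  simp [eisSummand]

lemma GG_split {k : ℕ} (hk : 3 ≤ k) (z z' : ℍ) (h : (z' : ℂ) = (z + 1) / 2) :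
    GG k z' = GG k z + 2 ^ k * Goo k z := by
  let g : (ℤ × ℤ) ⊕ (ℤ × ℤ) → ℤ × ℤ :=
    Sum.elim (fun p => (2 * p.1, p.2 - p.1)) (fun p => (2 * p.1 + 1, p.2 - p.1))
  have hg : Function.Bijective g := by
    constructor
    · rintro (⟨a, b⟩ | ⟨a, b⟩) (⟨c, d⟩ | ⟨c, d⟩) h <;> simp [g] at h ⊢ <;> omega
    · rintro ⟨m, n⟩
      rcases Int.even_or_odd' m with ⟨k, hk | hk⟩
      · exact ⟨Sum.inl (k, n + k), by simp [g]; omega⟩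
      · exact ⟨Sum.inr (k, n + k), by simp [g]; omega⟩
  have hf := GG_summable hk z'
  set f := fun p : ℤ × ℤ => (((p.1 : ℂ) * (z' : ℂ) + p.2) ^ k)⁻¹ with hfd
  have h2 : Summable (fun s => f (g s)) := (Equiv.ofBijective g hg).summable_iff.mpr hf
  have e1 : GG k z' = ∑' s, f (g s) := by
    rw [GG, ← (Equiv.ofBijective g hg).tsum_eq]; rfl
  rw [e1, Summable.tsum_sum (f := fun s => f (g s)) (h2.comp_injective Sum.inl_injective)
    (h2.comp_injective Sum.inr_injective)]
  congr 1
  · unfold GG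
    refine tsum_congr fun p => ?_
    simp only [hfd, g, Sum.elim_inl, h]
    push_cast
    congr 2; ring
  · unfold Goo
    rw [← tsum_mul_left]
    refine tsum_congr fun p => ?_
    simp only [hfd, g, Sum.elim_inr, h]
    push_cast
    rw [show ((2 * p.1 + 1 : ℂ) * z + (2 * p.2 + 1)) = 2 * ((2 * p.1 + 1) * ((z + 1) / 2) + (p.2 - p.1)) by ring,
      mul_pow, mul_inv, ← mul_assoc, mul_inv_cancel₀ (pow_ne_zero _ two_ne_zero), one_mul]

lemma GG4 (z : ℍ) : GG 4 z = π ^ 4 / 45 * f4 z := by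
  rw [GG_eq (by norm_num), tsum_eisSummand_eq_tsum_sigma_mul_cexp_pow (by norm_num) ⟨2, rfl⟩, f4_E4,
    q_expansion_riemannZeta (by norm_num) ⟨2, rfl⟩]
  have z2 : riemannZeta (4 : ℕ) = π ^ 4 / 90 := by exact_mod_cast riemannZeta_four
  have hp : (π : ℂ) ≠ 0 := by exact_mod_cast Real.pi_ne_zero
  simp only [z2, zpow_natCast]
  field_simp
  ring

lemma Goo4 {τ : ℂ} (hτ : 0 < τ.im) : Goo 4 τ =
    - π ^ 4 / 48 * (XX (cexp (π * I * τ)) * ZZ (-cexp (π * I * τ))) := by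
  let z : ℍ := ⟨τ, hτ⟩
  have h' : 0 < ((τ + 1) / 2).im := by simpa using hτ
  let z' : ℍ := ⟨(τ + 1) / 2, h'⟩
  have h := GG_split (k := 4) (by norm_num) z z' rfl
  rw [GG4, GG4] at h
  change π ^ 4 / 45 * f4 ((τ + 1) / 2) = π ^ 4 / 45 * f4 τ + 2 ^ 4 * Goo 4 τ at h
  rw [f4_eq, f4_eq] at h
  have hr2 : cexp (π * I * ((τ + 1) / 2)) ^ 2 = - cexp (π * I * τ) := by
    rw [neg_exp, ← Complex.exp_nat_mul]; congr 1; push_cast; ring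
  have hr1 := norm_q_lt h'
  have hr0 := Complex.exp_ne_zero (π * I * ((τ + 1) / 2))
  set r := cexp (π * I * ((τ + 1) / 2))
  have hj := jacobi_id (Complex.exp_ne_zero _) (norm_q_lt hτ)
  set q := cexp (π * I * τ)
  have a1 := T33 hr0 hr1
  have a2 := T33 (q := -r) (by simpa using hr0) (by simpa using hr1)
  rw [neg_sq, hr2] at a2
  rw [hr2] at a1
  have b1 : ZZ r = (T3 (-q) ^ 2 + r * T2 (-q) ^ 2) ^ 2 := by rw [← a1, ZZ]; ring
  have b2 : ZZ (-r) = (T3 (-q) ^ 2 + (-r) * T2 (-q) ^ 2) ^ 2 := by rw [← a2, ZZ]; ring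
  have b3 : ZZ (-q) = (T3 (-q) ^ 2) ^ 2 := by rw [ZZ]; ring
  have b4 : XX q = -(r * T2 (-q) ^ 2) ^ 2 := by
    rw [mul_pow, hr2, T2_neg, XX]; ring
  rw [hj, b1, b2, b4, b3] at h
  rw [b4, b3]
  linear_combination -(1/16) * h

lemma lam_summable {r : ℂ} (hr : ‖r‖ < 1) (k : ℕ) :
    Summable fun n : ℕ+ => (n : ℂ) ^ k * r ^ (n : ℕ) / (1 - r ^ (n : ℕ)) := by
  have h1 : Summable fun n : ℕ => ‖(n : ℂ) ^ k * r ^ n‖ := summable_norm_pow_mul_geometric_of_norm_lt_one k hr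
  have h2 : Summable fun n : ℕ+ => ‖(n : ℂ) ^ k * r ^ (n:ℕ)‖ * (1 - ‖r‖)⁻¹ :=
    (h1.comp_injective PNat.coe_injective).mul_right _
  refine Summable.of_norm_bounded h2 fun n => ?_
  rw [norm_div, div_eq_mul_inv]
  have : ‖r ^ (n:ℕ)‖ ≤ ‖r‖ := by
    rw [norm_pow]; exact pow_le_of_le_one (norm_nonneg _) hr.le n.ne_zero
  have h3 : 1 - ‖r‖ ≤ ‖1 - r ^ (n:ℕ)‖ := by
    have := norm_sub_norm_le (1:ℂ) (r ^ (n:ℕ))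
    simp at this ⊢
    simp at *
    linarith
  gcongr

lemma Goo_sum {k : ℕ} (hk : 3 ≤ k) (hk2 : Even k) {τ : ℂ} (hτ : 0 < τ.im) :
    2 ^ k * Goo k τ = 2 * ((-2 * π * I) ^ k / (k - 1)!) * ∑' n : ℕ+, (n : ℂ) ^ (k - 1) *
      ((-cexp (π * I * τ)) ^ (n : ℕ) / (1 - ((-cexp (π * I * τ)) ^ (n : ℕ)) ^ 2)) := by
  let z : ℍ := ⟨τ, hτ⟩
  have h' : 0 < ((τ + 1) / 2).im := by simpa using hτ
  let z' : ℍ := ⟨(τ + 1) / 2, h'⟩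
  have h := GG_split hk z z' rfl
  rw [GG_eq hk, GG_eq hk, tsum_eisSummand_eq_tsum_sigma_mul_cexp_pow hk hk2,
    tsum_eisSummand_eq_tsum_sigma_mul_cexp_pow hk hk2] at h
  have e1 : cexp (2 * π * I * z') = -cexp (π * I * τ) := by
    rw [neg_exp]; congr 1; change 2 * π * I * ((τ + 1) / 2) = _; ring
  have e2 : cexp (2 * π * I * z) = (-cexp (π * I * τ)) ^ 2 := by
    rw [neg_sq, ← Complex.exp_nat_mul]; congr 1; change 2 * π * I * τ = _; push_cast; ring
  have hn : ‖-cexp (π * I * τ)‖ < 1 := by rw [norm_neg]; exact norm_q_lt hτ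
  have hn2 : ‖(-cexp (π * I * τ)) ^ 2‖ < 1 := by
    rw [norm_pow]; exact pow_lt_one₀ (norm_nonneg _) hn two_ne_zero
  rw [e1, e2, ← tsum_pow_div_one_sub_eq_tsum_sigma hn, ← tsum_pow_div_one_sub_eq_tsum_sigma hn2] at h
  have hs := (lam_summable hn (k - 1)).tsum_sub (lam_summable hn2 (k - 1))
  have e3 : ∀ n : ℕ+, (n : ℂ) ^ (k - 1) *
      ((-cexp (π * I * τ)) ^ (n : ℕ) / (1 - ((-cexp (π * I * τ)) ^ (n : ℕ)) ^ 2)) =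
      (n : ℂ) ^ (k - 1) * (-cexp (π * I * τ)) ^ (n : ℕ) / (1 - (-cexp (π * I * τ)) ^ (n : ℕ)) -
      (n : ℂ) ^ (k - 1) * ((-cexp (π * I * τ)) ^ 2) ^ (n : ℕ) / (1 - ((-cexp (π * I * τ)) ^ 2) ^ (n : ℕ)) := by
    intro n
    have hw : ‖(-cexp (π * I * τ)) ^ (n : ℕ)‖ < 1 := by
      rw [norm_pow]; exact pow_lt_one₀ (norm_nonneg _) hn n.ne_zero
    rw [show ((-cexp (π * I * τ)) ^ 2) ^ (n : ℕ) = ((-cexp (π * I * τ)) ^ (n : ℕ)) ^ 2 from pow_right_comm _ _ _]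
    set w := (-cexp (π * I * τ)) ^ (n : ℕ)
    have h1 : 1 - w ≠ 0 := by
      intro h; rw [sub_eq_zero] at h; rw [← h] at hw; simp at hw
    have h2 : 1 + w ≠ 0 := by
      intro h; rw [show w = -1 by linear_combination h] at hw; simp at hw
    rw [show 1 - w ^ 2 = (1 - w) * (1 + w) by ring]
    field_simp
    ring
  rw [tsum_congr e3, hs]
  linear_combination -h

lemma Goo_sinh {s : ℕ} (hs : 1 ≤ s) {t : ℝ} (ht : 0 < t) :
    ((∑' n : ℕ, (-1 : ℝ) ^ n * ((n : ℝ) + 1) ^ (4 * s - 1) / Real.sinh (((n : ℝ) + 1) * (π * t)) : ℝ) : ℂ)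
      = - (4 * s - 1)! / π ^ (4 * s) * Goo (4 * s) (I * t) := by
  have h := Goo_sum (k := 4 * s) (by omega) ⟨2 * s, by ring⟩ (τ := I * t) (by simpa using ht)
  rw [← qq_cast, tsum_pnat_eq_tsum_succ (f := fun n : ℕ => (n : ℂ) ^ (4 * s - 1) *
      ((-(qq t : ℂ)) ^ (n : ℕ) / (1 - ((-(qq t : ℂ)) ^ (n : ℕ)) ^ 2)))] at h
  have e : ∀ n : ℕ, ((n + 1 : ℕ) : ℂ) ^ (4 * s - 1) *
      ((-(qq t : ℂ)) ^ (n + 1 : ℕ) / (1 - ((-(qq t : ℂ)) ^ (n + 1 : ℕ)) ^ 2)) =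
      (-(1/2 : ℂ)) * (((-1 : ℝ) ^ n * ((n : ℝ) + 1) ^ (4 * s - 1) / Real.sinh (((n : ℝ) + 1) * (π * t)) : ℝ) : ℂ) := by
    intro n
    have hq := qq_pos t
    have e1 : Real.sinh (((n : ℝ) + 1) * (π * t)) = ((qq t ^ (n + 1))⁻¹ - qq t ^ (n + 1)) / 2 := by
      rw [Real.sinh_eq, qq, ← Real.exp_nat_mul, ← Real.exp_neg]
      push_cast
      congr 3 <;> ring_nf
    have hpos : 0 < qq t ^ (n + 1) := by positivity
    have hlt : qq t ^ (n + 1) < 1 := pow_lt_one₀ hq.le (qq_lt ht) (by omega)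
    rw [e1]
    have : ((n:ℝ) + 1) ^ (4 * s - 1) * ((-(qq t)) ^ (n + 1 : ℕ) / (1 - ((-(qq t)) ^ (n + 1 : ℕ)) ^ 2)) =
      (-(1/2)) * ((-1 : ℝ) ^ n * ((n : ℝ) + 1) ^ (4 * s - 1) / (((qq t ^ (n + 1))⁻¹ - qq t ^ (n + 1)) / 2)) := by
      rw [neg_pow (qq t), mul_pow, ← pow_mul, mul_comm (n+1) 2, pow_mul]
      norm_num
      set w := qq t ^ (n + 1)
      have h1 : 1 - w ^ 2 ≠ 0 := by nlinarith
      have h3 : w⁻¹ - w = (1 - w ^ 2) / w := by field_simp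
      rw [h3]
      field_simp
      ring
    have h2 := congrArg (fun x : ℝ => (x : ℂ)) this
    push_cast at h2 ⊢
    exact h2
  rw [tsum_congr e, tsum_mul_left, ← Complex.ofReal_tsum] at h
  set F := ((∑' n : ℕ, (-1 : ℝ) ^ n * ((n : ℝ) + 1) ^ (4 * s - 1) / Real.sinh (((n : ℝ) + 1) * (π * t)) : ℝ) : ℂ)
  have hp : (π : ℂ) ≠ 0 := by exact_mod_cast Real.pi_ne_zero
  have hI : (-2 * π * I : ℂ) ^ (4 * s) = 2 ^ (4 * s) * π ^ (4 * s) := by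
    rw [mul_pow, mul_pow, pow_mul I, I_pow_four, one_pow, mul_one, Even.neg_pow ⟨2 * s, by ring⟩]
  rw [hI] at h
  have hf : (((4 * s - 1)! : ℕ) : ℂ) ≠ 0 := by exact_mod_cast Nat.factorial_ne_zero _
  have h2 : (2 : ℂ) ^ (4 * s) ≠ 0 := pow_ne_zero _ two_ne_zero
  have h4 : Goo (4 * s) (I * t) = - π ^ (4 * s) / (4 * s - 1)! * F := by
    apply mul_left_cancel₀ h2
    rw [h]; ring
  rw [h4]
  field_simp
end EE

section FF
open Finset Polynomial

def Dat (d : ℕ → ℂ) (w ρ : ℂ) : Prop :=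
  d 1 = 0 ∧ d 2 = -w^2*ρ/8 ∧ 144 * d 0 ^ 2 = w^2*(1-4*ρ) ∧
  ∀ n ≥ 1, d (n+2) = 6 * ∑ a ∈ range (n+1), (n.choose a : ℂ) * d a * d (n-a)

def shp (d : ℕ → ℂ) (w : ℂ) (n : ℕ) : ℂ :=
  if n % 4 = 0 then d 0 * w^(n/2) else if n % 4 = 2 then w^(n/2+1) else 0

lemma shp_mul (a b : ℕ) : ∃ Q : ℚ[X], ∀ d w ρ, Dat d w ρ →
    shp d w a * shp d w b = shp d w (a+b+2) * aeval ρ Q := by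
  have h4 : a % 4 < 4 := Nat.mod_lt _ (by norm_num)
  have h4' : b % 4 < 4 := Nat.mod_lt _ (by norm_num)
  by_cases ha : a % 4 = 0
  · by_cases hb : b % 4 = 0
    · refine ⟨C (1/144) * (1 - 4 * X), fun d w ρ h => ?_⟩
      have h1 : (a+b+2) % 4 = 2 := by omega
      have h0 : d 0 ^ 2 = w^2*(1-4*ρ)/144 := by linear_combination h.2.2.1 / 144
      have e : (a+b+2)/2+1 = a/2 + b/2 + 2 := by omega
      simp only [shp, ha, hb, h1, e]
      norm_num [pow_add, map_ofNat]
      linear_combination w^(a/2) * w^(b/2) * h0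
    · by_cases hb2 : b % 4 = 2
      · refine ⟨1, fun d w ρ h => ?_⟩
        have h1 : (a+b+2) % 4 = 0 := by omega
        have e : (a+b+2)/2 = a/2 + b/2 + 1 := by omega
        simp only [shp, ha, hb2, h1, e]
        norm_num [pow_add, map_ofNat]
        ring
      · refine ⟨0, fun d w ρ h => ?_⟩
        simp [shp, hb, hb2]
  · by_cases ha2 : a % 4 = 2
    · by_cases hb : b % 4 = 0
      · refine ⟨1, fun d w ρ h => ?_⟩
        have h1 : (a+b+2) % 4 = 0 := by omega
        have e : (a+b+2)/2 = a/2 + b/2 + 1 := by omega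
        simp only [shp, ha2, hb, h1, e]
        norm_num [pow_add, map_ofNat]
        ring
      · by_cases hb2 : b % 4 = 2
        · refine ⟨1, fun d w ρ h => ?_⟩
          have h1 : (a+b+2) % 4 = 2 := by omega
          have e : (a+b+2)/2 + 1 = a/2 + b/2 + 2 := by omega
          simp only [shp, ha2, hb2, h1, e]
          norm_num [pow_add, map_ofNat]
          ring
        · refine ⟨0, fun d w ρ h => ?_⟩
          simp [shp, hb, hb2]
    · refine ⟨0, fun d w ρ h => ?_⟩
      simp [shp, ha, ha2]

lemma rec_main (n : ℕ) : ∃ P : ℚ[X], ∀ d w ρ, Dat d w ρ → d n = shp d w n * aeval ρ P := by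
  induction n using Nat.strong_induction_on with
  | _ n ih =>
    match n, ih with
    | 0, _ => exact ⟨1, fun d w ρ h => by simp [shp]⟩
    | 1, _ => exact ⟨0, fun d w ρ h => by simp [h.1]⟩
    | 2, _ =>
      refine ⟨C (-1/8) * X, fun d w ρ h => ?_⟩
      rw [h.2.1]; simp [shp]; ring
    | m+3, ih =>
      have key : ∀ a ∈ range (m+2), ∃ Q : ℚ[X], ∀ d w ρ, Dat d w ρ →
          d a * d (m+1-a) = shp d w (m+3) * aeval ρ Q := by
        intro a ha
        have ha' : a < m + 2 := by simpa using ha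
        obtain ⟨P1, h1⟩ := ih a (by omega)
        obtain ⟨P2, h2⟩ := ih (m+1-a) (by omega)
        obtain ⟨Q, hQ⟩ := shp_mul a (m+1-a)
        refine ⟨P1*P2*Q, fun d w ρ h => ?_⟩
        have := hQ d w ρ h
        rw [show a + (m+1-a) + 2 = m+3 by omega] at this
        rw [h1 d w ρ h, h2 d w ρ h]
        simp only [map_mul]
        linear_combination aeval ρ P1 * aeval ρ P2 * this
      choose! Q hQ using key
      refine ⟨6 * ∑ a ∈ range (m+2), (((m+1).choose a : ℕ) : ℚ[X]) * Q a, fun d w ρ h => ?_⟩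
      have := h.2.2.2 (m+1) (by omega)
      rw [show m+1+2 = m+3 by omega, show m+1+1 = m+2 by omega] at this
      rw [this]
      simp only [map_mul, map_sum, map_natCast, map_ofNat, Finset.mul_sum]
      refine Finset.sum_congr rfl fun a ha => ?_
      linear_combination 6 * ((m+1).choose a : ℂ) * hQ a ha d w ρ h
end FF

section GG
open Finset Filter Topology PeriodPair
open scoped Nat

lemma wp_iter (L : PeriodPair) {x : ℂ} (hx : x ∉ L.lattice) (n : ℕ) (hn : n ≠ 0) :
    iteratedDeriv n L.weierstrassP x = (n+1)! * L.sumInvPow x (n+2) := by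
  have := L.iteratedDeriv_weierstrassPExcept_self x (n := n)
  rw [weierstrassPExcept_of_notMem _ _ hx, if_neg hn] at this
  exact this

lemma wp_ode (L : PeriodPair) {x : ℂ} (hx : x ∉ L.lattice) (h4 : L.sumInvPow x 4 ≠ 0) :
    deriv L.derivWeierstrassP =ᶠ[𝓝 x] fun z => 6 * L.weierstrassP z ^ 2 - L.g₂ / 2 := by
  have hop : IsOpen (L.latticeᶜ : Set ℂ) := L.isClosed_lattice.isOpen_compl
  have hmul : ∀ z ∈ (L.latticeᶜ : Set ℂ), 
      L.derivWeierstrassP z * (deriv L.derivWeierstrassP z - (6 * L.weierstrassP z ^ 2 - L.g₂ / 2)) = 0 := by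
    intro z hz
    have d0 : HasDerivAt L.weierstrassP (L.derivWeierstrassP z) z := by
      rw [← L.deriv_weierstrassP]
      exact (L.analyticOnNhd_weierstrassP z hz).differentiableAt.hasDerivAt
    have d1 : HasDerivAt L.derivWeierstrassP (deriv L.derivWeierstrassP z) z :=
      (L.analyticOnNhd_derivWeierstrassP z hz).differentiableAt.hasDerivAt
    have e : (fun z => L.derivWeierstrassP z ^ 2) =ᶠ[𝓝 z] 
        fun z => 4 * L.weierstrassP z ^ 3 - L.g₂ * L.weierstrassP z - L.g₃ := by
      filter_upwards [hop.mem_nhds hz] with u hu using L.derivWeierstrassP_sq u hu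
    have a1 := (d1.pow 2).congr_of_eventuallyEq e.symm
    have a2 := (((d0.pow 3).const_mul 4).sub (d0.const_mul L.g₂)).sub_const L.g₃
    have := a1.unique a2
    push_cast at this
    linear_combination this / 2
  have an1 : AnalyticAt ℂ L.derivWeierstrassP x := L.analyticOnNhd_derivWeierstrassP x hx
  have an0 : AnalyticAt ℂ L.weierstrassP x := L.analyticOnNhd_weierstrassP x hx
  have an : AnalyticAt ℂ (fun z => deriv L.derivWeierstrassP z - (6 * L.weierstrassP z ^ 2 - L.g₂ / 2)) x := by
    have := an1.deriv
    fun_prop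
  rcases an1.eventually_eq_zero_or_eventually_ne_zero with h | h
  · exfalso
    have h' : L.derivWeierstrassP =ᶠ[𝓝 x] fun _ => 0 := h
    have h2 := wp_iter L hx 2 (by norm_num)
    rw [iteratedDeriv_succ, iteratedDeriv_one, L.deriv_weierstrassP, h'.deriv_eq] at h2
    simp at h2
    exact h4 (h2.resolve_left (Nat.factorial_ne_zero 3))
  · rcases an.eventually_eq_zero_or_eventually_ne_zero with h' | h'
    · filter_upwards [h'] with z hz
      exact sub_eq_zero.mp hz
    · exfalso
      have : ∀ᶠ z in 𝓝[≠] x, False := by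
        filter_upwards [h, h', mem_nhdsWithin_of_mem_nhds (hop.mem_nhds hx)] with z h1 h2 h3
        exact (mul_ne_zero h1 h2) (hmul z h3)
      simp at this
      exact NeBot.ne inferInstance this

lemma wp_rec0 (L : PeriodPair) {x : ℂ} (hx : x ∉ L.lattice) (h4 : L.sumInvPow x 4 ≠ 0) :
    6 * L.sumInvPow x 4 = 6 * L.weierstrassP x ^ 2 - L.g₂ / 2 := by
  have h2 := wp_iter L hx 2 (by norm_num)
  rw [iteratedDeriv_succ, iteratedDeriv_one, L.deriv_weierstrassP, (wp_ode L hx h4).eq_of_nhds] at h2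
  rw [h2]
  norm_num [Nat.factorial]

lemma wp_rec (L : PeriodPair) {x : ℂ} (hx : x ∉ L.lattice) (h4 : L.sumInvPow x 4 ≠ 0) (n : ℕ) (hn : 1 ≤ n) :
    iteratedDeriv (n+2) L.weierstrassP x = 6 * ∑ a ∈ range (n+1), (n.choose a : ℂ) *
      iteratedDeriv a L.weierstrassP x * iteratedDeriv (n-a) L.weierstrassP x := by
  have an0 : AnalyticAt ℂ L.weierstrassP x := L.analyticOnNhd_weierstrassP x hx
  rw [iteratedDeriv_succ', iteratedDeriv_succ', L.deriv_weierstrassP, 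
    ((wp_ode L hx h4).iteratedDeriv n).eq_of_nhds]
  obtain ⟨m, rfl⟩ : ∃ m, n = m+1 := ⟨n-1, by omega⟩
  have : iteratedDeriv (m+1) (fun z => 6 * L.weierstrassP z ^ 2 - L.g₂ / 2) x
     = iteratedDeriv (m+1) (fun z => 6 * (L.weierstrassP * L.weierstrassP) z) x := by
    rw [iteratedDeriv_succ', iteratedDeriv_succ']
    congr 1
    ext z
    rw [deriv_sub_const]
    congr 1
    ext z
    simp [sq]
  rw [this, iteratedDeriv_const_mul_field, iteratedDeriv_mul an0.contDiffAt an0.contDiffAt]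

lemma wp_d1 (L : PeriodPair) {x : ℂ} (hx : x + x ∈ L.lattice) : L.derivWeierstrassP x = 0 := by
  have h1 := L.derivWeierstrassP_add_coe (-x) ⟨x + x, hx⟩
  rw [L.derivWeierstrassP_neg] at h1
  simp at h1
  linear_combination h1/2
end GG

section HH
open Finset Filter Topology PeriodPair Complex
open scoped Nat

noncomputable def LL (t : ℝ) (ht : 0 < t) : PeriodPair where
  ω₁ := 2
  ω₂ := 2 * (I * t)
  indep := by
    rw [LinearIndependent.pair_iff]
    intro a b h
    have h1 := congrArg Complex.re h
    have h2 := congrArg Complex.im h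
    simp at h1 h2
    exact ⟨h1, h2.resolve_right ht.ne'⟩

lemma LL_notMem (t : ℝ) (ht : 0 < t) : 1 + I * t ∉ (LL t ht).lattice := by
  have := mul_ω₁_add_mul_ω₂_mem_lattice (L := LL t ht) (α := 1/2) (β := 1/2)
  have e : (((1/2 : ℚ) : ℂ) * (LL t ht).ω₁ + ((1/2 : ℚ) : ℂ) * (LL t ht).ω₂) = 1 + I * t := by
    simp [LL]
  rw [e] at this
  rw [this]
  norm_num

lemma LL_mem (t : ℝ) (ht : 0 < t) : (1 + I * t) + (1 + I * t) ∈ (LL t ht).lattice := by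
  have := add_mem (LL t ht).ω₁_mem_lattice (LL t ht).ω₂_mem_lattice
  convert this using 1
  simp [LL]; ring

lemma LL_sum (t : ℝ) (ht : 0 < t) (k : ℕ) :
    (LL t ht).sumInvPow (1 + I * t) k = Goo k (I * t) := by
  unfold sumInvPow Goo
  rw [← (LL t ht).latticeEquivProd.symm.toEquiv.tsum_eq]
  let e : ℤ × ℤ ≃ ℤ × ℤ := (Equiv.prodComm ℤ ℤ).trans ((Equiv.addRight (1:ℤ)).prodCongr (Equiv.addRight (1:ℤ)))
  rw [← e.tsum_eq]
  congr 1; ext p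
  have := (LL t ht).latticeEquiv_symm_apply (e p)
  simp only [LinearEquiv.coe_toEquiv]
  rw [this]
  congr 2
  simp [LL, e]; ring

lemma LL_G (t : ℝ) (ht : 0 < t) : (LL t ht).G 4 = GG 4 (I * t) / 16 := by
  unfold PeriodPair.G GG
  rw [← (LL t ht).latticeEquivProd.symm.toEquiv.tsum_eq, ← tsum_div_const, ← (Equiv.prodComm ℤ ℤ).tsum_eq]
  congr 1; ext p
  have := (LL t ht).latticeEquiv_symm_apply (Equiv.prodComm ℤ ℤ p)
  rw [show (((LL t ht).latticeEquivProd.symm.toEquiv (Equiv.prodComm ℤ ℤ p) : (LL t ht).lattice) : ℂ) = _ from this]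
  have e : ((Equiv.prodComm ℤ ℤ p).1 * (LL t ht).ω₁ + (Equiv.prodComm ℤ ℤ p).2 * (LL t ht).ω₂ : ℂ)
    = 2 * (p.1 * (I * t) + p.2) := by
    simp [LL]; ring
  rw [e, mul_pow, mul_inv]; norm_num; ring

lemma LL_Dat (t : ℝ) (ht : 0 < t) :
    Dat (fun n => iteratedDeriv n (LL t ht).weierstrassP (1 + I * t)) (Real.pi ^ 2 * ZZ ((qq t : ℝ) : ℂ))
      (XX ((qq t : ℝ) : ℂ) * ZZ (-((qq t : ℝ) : ℂ)) / ZZ ((qq t : ℝ) : ℂ) ^ 2) := by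
  have hq := qq_pos t
  have hq1 := qq_lt ht
  have hZ : ZZ ((qq t : ℝ) : ℂ) ≠ 0 := by
    rw [← castZZ]; exact_mod_cast (ZZ_pos hq hq1).ne'
  have hX : XX ((qq t : ℝ) : ℂ) ≠ 0 := by
    rw [← castXX]; exact_mod_cast (XX_pos hq hq1).ne'
  have hY : ZZ (-((qq t : ℝ) : ℂ)) ≠ 0 := by
    rw [← ofReal_neg, ← castZZ]; exact_mod_cast (ZZn_pos hq hq1).ne'
  have hj : ZZ ((qq t : ℝ) : ℂ) = ZZ (-((qq t : ℝ) : ℂ)) + XX ((qq t : ℝ) : ℂ) := 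
    jacobi_id (by exact_mod_cast hq.ne') (by
      rw [Complex.norm_real, Real.norm_eq_abs, abs_of_pos hq]; exact hq1)
  have him : 0 < (I * t : ℂ).im := by simpa using ht
  have hpi : (Real.pi : ℂ) ≠ 0 := by exact_mod_cast Real.pi_ne_zero
  have hG := Goo4 him
  have hg := GG4 ⟨I * t, him⟩
  change GG 4 (I * t) = _ * f4 (I * t) at hg
  rw [f4_eq, ← qq_cast] at hg
  rw [← qq_cast] at hG
  have hS := LL_sum t ht 4
  have hx := LL_notMem t ht
  have h4 : (LL t ht).sumInvPow (1 + I * t) 4 ≠ 0 := by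
    rw [hS, hG]
    refine mul_ne_zero ?_ (mul_ne_zero hX hY)
    exact div_ne_zero (neg_ne_zero.mpr (pow_ne_zero _ hpi)) (by norm_num)
  have h0 := wp_rec0 _ hx h4
  rw [hS, hG, PeriodPair.g₂, LL_G, hg] at h0
  set X := XX ((qq t : ℝ) : ℂ)
  set Y := ZZ (-((qq t : ℝ) : ℂ))
  set Z := ZZ ((qq t : ℝ) : ℂ)
  refine ⟨?_, ?_, ?_, fun n hn => wp_rec _ hx h4 n hn⟩
  · simp only [iteratedDeriv_one, deriv_weierstrassP]
    exact wp_d1 _ (LL_mem t ht)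
  · simp only
    rw [wp_iter _ hx 2 (by norm_num), hS, hG]
    norm_num [Nat.factorial]
    field_simp
    norm_num
  · simp only [iteratedDeriv_zero]
    have e : (Real.pi ^ 2 * Z)^2 * (1 - 4 * (X * Y / Z^2)) = Real.pi^4 * (Z^2 - 4*(X*Y)) := by
      field_simp
    rw [e]
    have hX' : X = Z - Y := by rw [hj]; ring
    rw [hX'] at h0 ⊢
    linear_combination -24 * h0

theorem final_sum (s : ℕ) (hs : 1 ≤ s) : ∃ P : Polynomial ℚ, ∀ x ∈ Set.Ioo (0:ℝ) 1,
    ∑' n : ℕ, (-1:ℝ)^n * ((n:ℝ)+1)^(4*s-1) / Real.sinh (((n:ℝ)+1) * yEll x)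
      = zEll x ^ (4*s) * Polynomial.aeval (x*(1-x)) P := by
  obtain ⟨P, hP⟩ := rec_main (4*s-2)
  refine ⟨-P, fun x hx => ?_⟩
  obtain ⟨t, ht, h1, h2, hz, hy⟩ := param hx.1 hx.2
  rw [hy]
  have hZ := (ZZ_pos (qq_pos t) (qq_lt ht)).ne'
  have hρ : x * (1-x) = XX (qq t) * ZZ (-qq t) / ZZ (qq t)^2 := by
    rw [h2, h1]; field_simp
  have hzz : zEll x ^ (4*s) = ZZ (qq t) ^ (2*s) := by
    rw [← hz, ← pow_mul]; congr 1; ring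
  have hpi : (Real.pi : ℂ) ≠ 0 := by exact_mod_cast Real.pi_ne_zero
  have hd := hP _ _ _ (LL_Dat t ht)
  simp only [shp] at hd
  rw [if_neg (by omega), if_pos (by omega), wp_iter _ (LL_notMem t ht) _ (by omega), LL_sum,
    show (4*s-2)/2+1 = 2*s by omega, show 4*s-2+2 = 4*s by omega, show 4*s-2+1 = 4*s-1 by omega] at hd
  apply Complex.ofReal_injective
  rw [Goo_sinh hs ht, hzz, hρ]
  rw [← castZZ, ← castXX, ← ofReal_neg, ← castZZ] at hd
  have e : ((XX (qq t) : ℝ) : ℂ) * ((ZZ (-qq t) : ℝ) : ℂ) / ((ZZ (qq t) : ℝ) : ℂ)^2 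
     = algebraMap ℝ ℂ (XX (qq t) * ZZ (-qq t) / ZZ (qq t)^2) := by
    simp
  rw [e, Polynomial.aeval_algebraMap_apply] at hd
  simp only [map_neg, Complex.ofReal_mul, Complex.ofReal_pow, Complex.ofReal_neg]
  have hd' : -((4*s-1)! : ℂ) / Real.pi^(4*s) * Goo (4*s) (I*t) = 
    -(((4*s-1)! : ℂ) * Goo (4*s) (I*t)) / Real.pi^(4*s) := by ring
  rw [hd', hd, mul_pow, ← pow_mul, show 2 * (2*s) = 4*s by ring]
  field_simp
  rfl
end HH

theorem barS_in_z_pow_Qsigma (s : ℕ) (hs : 1 ≤ s) :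
    ∃ P : Polynomial ℚ, ∀ x ∈ Set.Ioo (0 : ℝ) 1,
      ∑' n : ℕ, (-1 : ℝ) ^ n * ((n : ℝ) + 1) ^ (4 * s - 1) /
          Real.sinh (((n : ℝ) + 1) * yEll x)
        = zEll x ^ (4 * s) * Polynomial.aeval (x * (1 - x)) P := by
  exact final_sum s hs
end

section
/- ∫₀^∞ x⁹/(cos x - cosh x)² dx = 27·Γ(1/4)^{16}/(5·2^{12}·π⁴) − Γ(1/4)^{24}/(2^{18}·π⁸). -/
section
open UpperHalfPlane ModularForm Filter EisensteinSeries MatrixGroups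
open scoped Topology Manifold ModularForm OnePoint

namespace Berndt

lemma tendsto_valueAtInfty {k : ℤ} (f : ModularForm 𝒮ℒ k) :
    Tendsto f atImInfty (𝓝 ((qExpansion 1 f).coeff 0)) := by
  have hh : (0:ℝ) < 1 := one_pos
  have hΓ : (1:ℝ) ∈ (𝒮ℒ : Subgroup (GL (Fin 2) ℝ)).strictPeriods := one_mem_strictPeriods_SL
  have hanal := ModularFormClass.analyticAt_cuspFunction_zero f hh hΓ
  have hper := SlashInvariantFormClass.periodic_comp_ofComplex f hΓ
  rw [qExpansion_coeff_zero hh hanal hper, ← cuspFunction_apply_zero hh hanal hper]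
  exact (hanal.continuousAt.tendsto.comp (qParam_tendsto_atImInfty hh)).congr
    (fun τ ↦ SlashInvariantFormClass.eq_cuspFunction f τ hΓ hh.ne')

lemma tendsto_E {k : ℕ} (hk : 3 ≤ k) (hk2 : Even k) : Tendsto (E hk) atImInfty (𝓝 1) := by
  have := tendsto_valueAtInfty (E hk)
  rwa [E_qExpansion_coeff_zero hk hk2] at this

lemma cusp_zero {k : ℤ} (h12 : k < 12) (F : ℍ → ℂ) (hF : MDiff F)
    (hs : ∀ γ : SL(2, ℤ), F ∣[k] γ = F) (hlim : Tendsto F atImInfty (𝓝 0)) : F = 0 := by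
  let f : CuspForm 𝒮ℒ k :=
    { toFun := F
      slash_action_eq' := fun _ ⟨γ, hγ⟩ ↦ hγ ▸ hs γ
      holo' := hF
      zero_at_cusps' := by
        intro c hc
        rw [Subgroup.IsArithmetic.isCusp_iff_isCusp_SL2Z] at hc
        rw [OnePoint.isZeroAt_iff_forall_SL2Z hc]
        intro γ _
        change IsZeroAtImInfty (F ∣[k] γ)
        rw [hs γ]
        exact hlim }
  have := rank_zero_iff_forall_zero.mp (CuspForm.rank_eq_zero_of_weight_lt_twelve h12) f
  ext z
  exact congrFun (congrArg DFunLike.coe this) z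

lemma eq_mul_E {k : ℕ} (hk : 3 ≤ k) (hk2 : Even k) (h12 : k < 12) (F : ℍ → ℂ) (hF : MDiff F)
    (hs : ∀ γ : SL(2, ℤ), F ∣[(k:ℤ)] γ = F) (c : ℂ) (hlim : Tendsto F atImInfty (𝓝 c)) (z : ℍ) :
    F z = c * E hk z := by
  have hE : MDiff (E hk : ℍ → ℂ) := (E hk).holo'
  have h : F - c • (E hk : ℍ → ℂ) = 0 := by
    refine cusp_zero (k := k) (by exact_mod_cast h12) _ ?_ ?_ ?_
    · exact hF.sub (hE.const_smul c)
    · intro γ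
      have := SlashInvariantFormClass.slash_action_eq (E hk) γ ⟨γ, rfl⟩
      rw [sub_eq_add_neg, SlashAction.add_slash, SlashAction.neg_slash, ModularForm.SL_smul_slash, hs γ]
      congr 3
    · have := hlim.sub ((tendsto_E hk hk2).const_mul c)
      simp only [mul_one, sub_self] at this
      exact this
  have := congrFun h z
  simpa [sub_eq_zero] using this

lemma tendsto_tsum_q (a : ℕ+ → ℂ) (ha : ∀ z : ℍ, Summable fun n : ℕ+ ↦ a n * (Complex.exp (2 * Real.pi * Complex.I * z)) ^ (n : ℕ)) :
    Tendsto (fun z : ℍ ↦ ∑' n : ℕ+, a n * (Complex.exp (2 * Real.pi * Complex.I * z)) ^ (n : ℕ)) atImInfty (𝓝 0) := by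
  have hq : Tendsto (fun z : ℍ ↦ Complex.exp (2 * Real.pi * Complex.I * z)) atImInfty (𝓝 0) := by
    have := qParam_tendsto_atImInfty one_pos
    simpa [Function.Periodic.qParam] using this
  have h := tendsto_tsum_of_dominated_convergence (𝓕 := atImInfty)
    (f := fun (z : ℍ) (n : ℕ+) ↦ a n * (Complex.exp (2 * Real.pi * Complex.I * z)) ^ (n : ℕ))
    (g := fun _ ↦ (0:ℂ)) (bound := fun n ↦ ‖a n * (Complex.exp (2 * Real.pi * Complex.I * (UpperHalfPlane.I : ℍ))) ^ (n : ℕ)‖)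
    (ha _).norm ?_ ?_
  · simpa using h
  · intro n
    have := (hq.pow (n:ℕ)).const_mul (a n)
    simpa using this
  · have := atImInfty_basis.mem_of_mem (i := 1) trivial
    filter_upwards [this] with z hz n
    simp only [norm_mul, norm_pow]
    gcongr 
    simp only [Complex.norm_exp]
    have hz' : (1:ℝ) ≤ z.im := by simpa using hz
    simp
    nlinarith [Real.pi_pos]

lemma tendsto_E2 : Tendsto E2 atImInfty (𝓝 1) := by
  have h := tendsto_tsum_q (fun n ↦ (ArithmeticFunction.sigma 1 n : ℂ)) (fun z ↦ by
    have := EisensteinSeries.summable_sigma_mul_cexp_pow (k := 2) (by norm_num) z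
    exact this.comp_injective PNat.coe_injective)
  have h2 := (h.const_mul 24).const_sub 1
  simp only [mul_zero, sub_zero] at h2
  refine h2.congr fun z ↦ ?_
  rw [E2_eq_tsum_cexp]

open Derivative
lemma tendsto_D {F : ℍ → ℂ} (hF : MDiff F) {c : ℂ} (hb : Tendsto F atImInfty (𝓝 c)) :
    Tendsto (normalizedDerivOfComplex F) atImInfty (𝓝 0) := by
  have hbd : ∀ᶠ z in atImInfty, ‖F z‖ ≤ ‖c‖ + 1 := by
    have := hb.norm.eventually (gt_mem_nhds (lt_add_one ‖c‖))
    filter_upwards [this] with z hz using hz.le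
  obtain ⟨A, hA⟩ := (atImInfty_mem _).mp hbd
  have him : Tendsto (fun z : ℍ ↦ z.im) atImInfty atTop := tendsto_comap
  have hg : Tendsto (fun z : ℍ ↦ ‖(2 * Real.pi * Complex.I)⁻¹‖ * ((‖c‖ + 1) / (z.im / 2))) atImInfty (𝓝 0) := by
    have : Tendsto (fun z : ℍ ↦ (‖c‖ + 1) / (z.im / 2)) atImInfty (𝓝 0) :=
      Tendsto.div_atTop tendsto_const_nhds (him.atTop_div_const (by norm_num))
    simpa using this.const_mul ‖(2 * Real.pi * Complex.I)⁻¹‖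
  refine squeeze_zero_norm' ?_ hg
  filter_upwards [him.eventually_ge_atTop (2 * A)] with z hz
  rw [normalizedDerivOfComplex, norm_mul]
  gcongr
  have hzpos := z.im_pos
  have himball : ∀ w ∈ Metric.closedBall (z:ℂ) (z.im / 2), z.im / 2 ≤ w.im := by
    intro w hw
    have h1 : |(w - z).im| ≤ z.im / 2 := (Complex.abs_im_le_norm _).trans (by simpa [dist_eq_norm] using hw)
    have h2 := abs_le.mp h1
    simp at h2
    linarith [h2.1]
  have hdiff : DifferentiableOn ℂ (F ∘ ofComplex) {w | 0 < w.im} := UpperHalfPlane.mdifferentiable_iff.mp hF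
  refine Complex.norm_deriv_le_of_forall_mem_sphere_norm_le (by positivity) ?_ ?_
  · refine DifferentiableOn.diffContOnCl ?_
    refine hdiff.mono ?_
    rw [closure_ball _ (by positivity)]
    intro w hw
    have := himball w hw
    simp only [Set.mem_ofPred_eq]; linarith
  · intro w hw
    have h := himball w (Metric.sphere_subset_closedBall hw)
    have hw0 : 0 < w.im := by linarith
    simp only [Function.comp_apply, ofComplex_apply_of_im_pos hw0]
    apply hA
    change A ≤ w.im
    linarith

end Berndt
end

section
open UpperHalfPlane ModularForm Filter EisensteinSeries MatrixGroups
open scoped Topology Manifold ModularForm OnePoint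
open Derivative
namespace Berndt

lemma mdiff_E {k : ℕ} (hk : 3 ≤ k) : MDiff (E hk : ℍ → ℂ) := (E hk).holo'

lemma slash_E {k : ℕ} (hk : 3 ≤ k) (γ : SL(2, ℤ)) : (E hk : ℍ → ℂ) ∣[(k:ℤ)] γ = E hk :=
  SlashInvariantFormClass.slash_action_eq (E hk) γ ⟨γ, rfl⟩

lemma D_E {k : ℕ} (hk : 3 ≤ k) (hk2 : Even k) (h12 : k + 2 < 12) (z : ℍ) :
    normalizedDerivOfComplex (E hk) z =
      k / 12 * (E2 z * E hk z - E (k := k + 2) (by omega) z) := by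
  have h := eq_mul_E (k := k + 2) (by omega) (by grind) h12 (serreDerivative k (E hk))
    (serreDerivative_mdifferentiable _ (mdiff_E hk))
    (fun γ ↦ by
      have := serreDerivative_slash_invariant (mdiff_E hk) (slash_E hk γ)
      push_cast at this ⊢
      exact this) (0 - k * 12⁻¹ * 1 * 1) ?_ z
  · rw [serreDerivative_apply] at h
    linear_combination h
  · exact (tendsto_D (mdiff_E hk) (tendsto_E hk hk2)).sub
      ((tendsto_const_nhds.mul tendsto_E2).mul (tendsto_E hk hk2))

noncomputable def e4 : ℍ → ℂ := fun z => E (k := 4) (by norm_num) z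
noncomputable def e6 : ℍ → ℂ := fun z => E (k := 6) (by norm_num) z
noncomputable def e8 : ℍ → ℂ := fun z => E (k := 8) (by norm_num) z

lemma mdiff_e4 : MDiff e4 := mdiff_E (k := 4) (by norm_num)
lemma mdiff_e6 : MDiff e6 := mdiff_E (k := 6) (by norm_num)
lemma slash_e4 (γ : SL(2, ℤ)) : e4 ∣[(4:ℤ)] γ = e4 := slash_E (k := 4) (by norm_num) γ
lemma slash_e6 (γ : SL(2, ℤ)) : e6 ∣[(6:ℤ)] γ = e6 := slash_E (k := 6) (by norm_num) γ
lemma tendsto_e4 : Tendsto e4 atImInfty (𝓝 1) := tendsto_E (k := 4) (by norm_num) (by decide)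

lemma D_E2 (z : ℍ) :
    normalizedDerivOfComplex E2 z = 12⁻¹ * (E2 z ^ 2 - e4 z) := by
  have h := eq_mul_E (k := 4) (by omega) (by decide) (by norm_num)
    (normalizedDerivOfComplex E2 - (12⁻¹ : ℂ) • (E2 * E2))
    ((normalizedDerivOfComplex_mdifferentiable E2_mdifferentiable).sub
      ((E2_mdifferentiable.mul E2_mdifferentiable).const_smul _)) ?_ (0 - 12⁻¹ * (1 * 1)) ?_ z
  · simp only [Pi.sub_apply, Pi.smul_apply, Pi.mul_apply, smul_eq_mul] at h
    change _ = _ * e4 z at h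
    linear_combination h
  · intro γ
    set u : ℍ → ℂ := fun z ↦ γ 1 0 / denom γ z with hu
    have hE : E2 ∣[(2:ℤ)] γ = fun z ↦ E2 z + 12 * (2 * Real.pi * Complex.I)⁻¹ * u z := by
      rw [E2_slash_action]
      ext z
      simp [D2, hu, riemannZeta_two]
      have h1 := denom_ne_zero γ z
      have h2 : (Real.pi : ℂ) ≠ 0 := by exact_mod_cast Real.pi_ne_zero
      field_simp
      ring
    have hD := normalizedDerivOfComplex_SL_slash (k := 2) E2_mdifferentiable (γ := γ)
    ext w
    have hDw := congrFun hD w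
    have hu' : HasDerivAt (u ∘ ofComplex) (-(u w)^2) (w : ℂ) := by
      have h0 : denom γ w ≠ 0 := denom_ne_zero γ w
      have : HasDerivAt (fun v : ℂ ↦ (γ 1 0 : ℂ) / (γ 1 0 * v + γ 1 1)) (-(u w)^2) (w : ℂ) := by
        have h0' : (γ 1 0 * (w:ℂ) + γ 1 1 : ℂ) ≠ 0 := by
          rwa [ModularGroup.denom_apply] at h0
        have h3 := (((hasDerivAt_id (w:ℂ)).const_mul (γ 1 0 : ℂ)).add_const (γ 1 1 : ℂ)).inv h0'
        have h4 := h3.const_mul (γ 1 0 : ℂ)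
        have h5 : -(u w)^2 = (γ 1 0 : ℂ) * (-((γ 1 0 : ℂ) * 1) / ((γ 1 0 : ℂ) * id (w:ℂ) + (γ 1 1 : ℂ)) ^ 2) := by
          rw [hu]; beta_reduce; rw [ModularGroup.denom_apply]
          simp only [id]
          field_simp
        rw [h5]
        exact h4
      refine this.congr_of_eventuallyEq ?_
      filter_upwards [isOpen_upperHalfPlaneSet.mem_nhds w.im_pos] with v hv
      simp only [hu, Function.comp_apply, ModularGroup.denom_apply]
      rw [ofComplex_apply_of_im_pos hv]
    have hE2' : HasDerivAt (E2 ∘ ofComplex) (deriv (E2 ∘ ofComplex) w) (w:ℂ) :=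
      (UpperHalfPlane.mdifferentiableAt_iff.mp (E2_mdifferentiable w)).hasDerivAt
    have hsum : normalizedDerivOfComplex (E2 ∣[(2:ℤ)] γ) w =
        normalizedDerivOfComplex E2 w - 12 * (2 * Real.pi * Complex.I)⁻¹ ^ 2 * u w ^ 2 := by
      rw [hE]
      simp only [normalizedDerivOfComplex]
      have h5 := hE2'.add (hu'.const_mul (12 * (2 * Real.pi * Complex.I)⁻¹))
      have h6 : deriv ((fun z ↦ E2 z + 12 * (2 * Real.pi * Complex.I)⁻¹ * u z) ∘ ofComplex) (w:ℂ) = _ := h5.deriv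
      rw [h6]
      ring
    rw [hsum] at hDw
    have hmul := congrFun (ModularForm.mul_slash_SL2 2 2 γ E2 E2) w
    have hEw := congrFun hE w
    simp only [Pi.mul_apply] at hmul
    simp only [Pi.sub_apply] at hDw
    rw [hEw] at hmul hDw
    have h7 : ((normalizedDerivOfComplex E2 - (12⁻¹ : ℂ) • (E2 * E2)) ∣[((4:ℕ):ℤ)] γ) w =
      (normalizedDerivOfComplex E2 ∣[(2 + 2 : ℤ)] γ) w - 12⁻¹ * ((E2 * E2) ∣[(2+2:ℤ)] γ) w := by
      rw [sub_eq_add_neg, SlashAction.add_slash, SlashAction.neg_slash, ModularForm.SL_smul_slash]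
      simp [sub_eq_add_neg]
    rw [h7, hmul]
    simp only [Pi.sub_apply, Pi.smul_apply, Pi.mul_apply, smul_eq_mul]
    rw [show (γ 1 0 : ℂ) / denom γ w = u w from rfl] at hDw
    have hc : ((2:ℤ):ℂ) = 2 := by norm_num
    rw [hc] at hDw
    linear_combination -hDw
  · exact (tendsto_D E2_mdifferentiable tendsto_E2).sub ((tendsto_E2.mul tendsto_E2).const_mul _)

lemma E8_eq (z : ℍ) : e8 z = e4 z ^ 2 := by
  have h := eq_mul_E (k := 8) (by omega) (by decide) (by norm_num) (e4 * e4)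
    (mdiff_e4.mul mdiff_e4) (fun γ ↦ by
      have := ModularForm.mul_slash_SL2 4 4 γ e4 e4
      rw [show ((8:ℕ):ℤ) = 4 + 4 by norm_num, this, slash_e4]) (1 * 1) (tendsto_e4.mul tendsto_e4) z
  change _ = _ * e8 z at h
  simp only [Pi.mul_apply] at h
  linear_combination -h

lemma D_E6 (z : ℍ) : normalizedDerivOfComplex e6 z = 1 / 2 * (E2 z * e6 z - e4 z ^ 2) := by
  have := D_E (k := 6) (by norm_num) (by decide) (by norm_num) z
  change normalizedDerivOfComplex e6 z = _ * (_ * e6 z - e8 z) at this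
  rw [this, E8_eq]
  norm_num

lemma D_E4 (z : ℍ) : normalizedDerivOfComplex e4 z = 1 / 3 * (E2 z * e4 z - e6 z) := by
  have := D_E (k := 4) (by norm_num) (by decide) (by norm_num) z
  change normalizedDerivOfComplex e4 z = _ * (_ * e4 z - e6 z) at this
  rw [this]
  norm_num

lemma denom_S_I : denom ModularGroup.S UpperHalfPlane.I = Complex.I := by
  rw [ModularGroup.denom_S]; rfl

lemma S_I : ModularGroup.S • UpperHalfPlane.I = UpperHalfPlane.I := by
  ext; rw [UpperHalfPlane.modular_S_smul]; simp

lemma E6_I : e6 UpperHalfPlane.I = 0 := by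
  have h := congrFun (slash_e6 ModularGroup.S) UpperHalfPlane.I
  rw [ModularForm.SL_slash_apply, S_I, denom_S_I] at h
  have h3 : (Complex.I ^ (-(6:ℤ))) = -1 := by
    rw [zpow_neg]
    have : (Complex.I ^ 6)⁻¹ = -1 := by
      rw [show (6:ℕ) = 4 + 2 by norm_num, pow_add]; norm_num [Complex.I_pow_four]
    exact_mod_cast this
  rw [h3] at h
  linear_combination -1/2 * h

lemma E2_I : E2 UpperHalfPlane.I = 3 / Real.pi := by
  have h := congrFun (E2_slash_action ModularGroup.S) UpperHalfPlane.I
  rw [ModularForm.SL_slash_apply, S_I, denom_S_I] at h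
  have h3 : (Complex.I ^ (-(2:ℤ))) = -1 := by
    rw [zpow_neg]; norm_cast; norm_num
  rw [h3] at h
  simp [D2_S, riemannZeta_two] at h
  have h2 : (Real.pi : ℂ) ≠ 0 := by exact_mod_cast Real.pi_ne_zero
  field_simp at h ⊢
  linear_combination -1/2 * h

lemma e8_mul : e8 = e4 * e4 := by
  ext z; rw [E8_eq, Pi.mul_apply]; ring

lemma DE8_I : normalizedDerivOfComplex e8 UpperHalfPlane.I = 2 * e4 UpperHalfPlane.I ^ 2 / Real.pi := by
  rw [e8_mul, normalizedDerivOfComplex_mul _ _ mdiff_e4 mdiff_e4]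
  simp only [Pi.add_apply, Pi.mul_apply, D_E4, E6_I, E2_I]
  ring

lemma DDE8_I : normalizedDerivOfComplex (normalizedDerivOfComplex e8) UpperHalfPlane.I
    = 9 / 2 * e4 UpperHalfPlane.I ^ 2 / Real.pi ^ 2 + 5 / 18 * e4 UpperHalfPlane.I ^ 3 := by
  have h2 : normalizedDerivOfComplex e8 = (2 / 3 : ℂ) • (e4 * (E2 * e4 - e6)) := by
    rw [e8_mul, normalizedDerivOfComplex_mul _ _ mdiff_e4 mdiff_e4]
    ext z
    simp only [Pi.add_apply, Pi.mul_apply, D_E4, Pi.smul_apply, Pi.sub_apply, smul_eq_mul]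
    ring
  have h4 := mdiff_e4
  have h6 := mdiff_e6
  have e2 := E2_mdifferentiable
  rw [h2, normalizedDerivOfComplex_smul _ _ (h4.mul ((e2.mul h4).sub h6)),
    normalizedDerivOfComplex_mul _ _ h4 ((e2.mul h4).sub h6),
    normalizedDerivOfComplex_sub _ _ (e2.mul h4) h6, normalizedDerivOfComplex_mul _ _ e2 h4]
  simp only [Pi.add_apply, Pi.mul_apply, D_E4, D_E2, D_E6, E6_I, E2_I, Pi.smul_apply, Pi.sub_apply, smul_eq_mul]
  have h2 : (Real.pi : ℂ) ≠ 0 := by exact_mod_cast Real.pi_ne_zero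
  field_simp
  ring

end Berndt
end

section
open UpperHalfPlane ModularForm Filter EisensteinSeries MatrixGroups
open scoped Topology Manifold ModularForm OnePoint
open Derivative
namespace Berndt

noncomputable def et (j k : ℕ) (z : ℂ) (v : Fin 2 → ℤ) : ℂ := (v 0 : ℂ) ^ j / ((v 0 : ℂ) * z + v 1) ^ k

lemma et_zero (k : ℕ) (z : ℍ) (v : Fin 2 → ℤ) : et 0 k z v = eisSummand k v z := by
  simp [et, eisSummand]

lemma norm_ge (v : Fin 2 → ℤ) : |(v 0 : ℝ)| ≤ ‖(v 0 : ℂ) * Complex.I + v 1‖ := by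
  have := Complex.abs_im_le_norm ((v 0 : ℂ) * Complex.I + v 1)
  simpa using this

lemma norm_ge' (v : Fin 2 → ℤ) (z : ℂ) (hz : z ∈ Metric.ball Complex.I (1/2)) :
    ‖(v 0 : ℂ) * Complex.I + v 1‖ / 2 ≤ ‖(v 0 : ℂ) * z + v 1‖ := by
  have h1 : (v 0 : ℂ) * Complex.I + v 1 = ((v 0 : ℂ) * z + v 1) - (v 0 : ℂ) * (z - Complex.I) := by ring
  have h2 : ‖(v 0 : ℂ) * (z - Complex.I)‖ ≤ |(v 0 : ℝ)| * (1/2) := by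
    rw [norm_mul]
    have h3 : ‖(v 0 : ℂ)‖ = |(v 0 : ℝ)| := by simp
    rw [h3]
    have h4 : ‖z - Complex.I‖ ≤ 1/2 := (mem_ball_iff_norm.mp hz).le
    gcongr
  have h5 := norm_sub_le ((v 0 : ℂ) * z + v 1) ((v 0 : ℂ) * (z - Complex.I))
  rw [← h1] at h5
  have := norm_ge v
  linarith

lemma ne_zero_of_v {v : Fin 2 → ℤ} (hv : v ≠ 0) : (v 0 : ℂ) * Complex.I + v 1 ≠ 0 := by
  intro h
  apply hv
  have h1 := congrArg Complex.im h
  have h2 := congrArg Complex.re h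
  simp at h1 h2
  ext i; fin_cases i <;> simp [h1, h2]

lemma et_bound (j k : ℕ) (hk : j < k) (v : Fin 2 → ℤ) (z : ℂ) (hz : z ∈ Metric.ball Complex.I (1/2)) :
    ‖et j k z v‖ ≤ 2 ^ k * ‖eisSummand (k - j : ℕ) v UpperHalfPlane.I‖ := by
  by_cases hv : v = 0
  · subst hv
    have : k ≠ 0 := by omega
    simp [et, this]
  have h0 := norm_pos_iff.mpr (ne_zero_of_v hv)
  have h1 := norm_ge' v z hz
  have h2 := norm_ge v
  rw [← et_zero, et, et]
  simp only [UpperHalfPlane.coe_I]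
  rw [norm_div, norm_pow, norm_pow, norm_div, norm_pow, norm_pow, pow_zero]
  set a := ‖(v 0 : ℂ) * Complex.I + v 1‖
  have h3 : ‖(v 0 : ℂ)‖ = |(v 0 : ℝ)| := by simp
  rw [h3]
  calc |(v 0 : ℝ)| ^ j / ‖(v 0 : ℂ) * z + v 1‖ ^ k ≤ a ^ j / (a/2) ^ k := by gcongr
    _ = _ := by
      rw [div_pow]
      have : a ^ k = a ^ j * a ^ (k - j) := by rw [← pow_add]; congr 1; omega
      rw [this]
      field_simp

lemma et_summable (j k : ℕ) (hk : j + 3 ≤ k) (z : ℂ) (hz : z ∈ Metric.ball Complex.I (1/2)) :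
    Summable (et j k z) :=
  Summable.of_norm_bounded ((summable_norm_eisSummand (k := ((k - j : ℕ) : ℤ)) (by omega) _).mul_left (2 ^ k))
    fun v => et_bound j k (by omega) v z hz

lemma et_hasDerivAt (j k : ℕ) (hk : j + 3 ≤ k) (z : ℂ) (hz : z ∈ Metric.ball Complex.I (1/2)) :
    HasDerivAt (fun w => ∑' v, et j k w v) (-k * ∑' v, et (j+1) (k+1) z v) z := by
  rw [← tsum_mul_left]
  have hI : Complex.I ∈ Metric.ball Complex.I (1/2) := by simp
  refine hasDerivAt_tsum_of_isPreconnected (t := Metric.ball Complex.I (1/2))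
    (g := fun v w => et j k w v) (g' := fun v w => -k * et (j+1) (k+1) w v)
    (((summable_norm_eisSummand (k := ((k - j : ℕ) : ℤ)) (by omega) UpperHalfPlane.I).mul_left (2 ^ (k + 1))).mul_left (k:ℝ))
    Metric.isOpen_ball (convex_ball _ _).isPreconnected ?_ ?_ hI (et_summable j k hk _ hI) hz
  · intro v y hy
    by_cases hv : v = 0
    · subst hv
      have : k ≠ 0 := by omega
      simp [et, this]
      exact hasDerivAt_const _ _
    have h0 := norm_pos_iff.mpr (ne_zero_of_v hv)
    have h1 := norm_ge' v y hy
    have h2 : (v 0 : ℂ) * y + v 1 ≠ 0 := by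
      rw [← norm_pos_iff]; linarith
    have h3 := ((((hasDerivAt_id y).const_mul (v 0 : ℂ)).add_const (v 1 : ℂ)).pow k).inv (pow_ne_zero k h2)
    have h4 := h3.const_mul ((v 0 : ℂ) ^ j)
    refine h4.congr_deriv ?_
    simp only [et, id, Pi.pow_apply]
    obtain ⟨l, rfl⟩ : ∃ l, k = l + 1 := ⟨k - 1, by omega⟩
    simp only [Nat.add_sub_cancel]
    field_simp
    try ring
  · intro v y hy
    have := et_bound (j+1) (k+1) (by omega) v y hy
    rw [show k + 1 - (j + 1) = k - j by omega] at this
    rw [norm_mul, norm_neg, Complex.norm_natCast]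
    gcongr

lemma tsum_et (k : ℕ) (hk : 3 ≤ k) (z : ℍ) : ∑' v, et 0 k z v = 2 * riemannZeta k * E hk z := by
  simp_rw [et_zero]
  rw [tsum_eisSummand_eq_riemannZeta_mul_eisensteinSeries hk z]
  have : E hk z = (1/2 : ℂ) • eisensteinSeriesSIF (N := 1) 0 k z := rfl
  rw [this, eisensteinSeriesSIF_apply]
  simp
  ring

lemma zeta8 : riemannZeta (8:ℕ) = Real.pi ^ 8 / 9450 := by
  have := riemannZeta_two_mul_nat (k := 4) (by norm_num)
  have hb : bernoulli (2 * 4) = -1/30 := by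
    rw [bernoulli_eq_bernoulli'_of_ne_one (by norm_num)]
    norm_num
    rw [bernoulli'_def]
    have h5 : bernoulli' 5 = 0 := bernoulli'_eq_zero_of_odd (by decide) (by norm_num)
    have h7 : bernoulli' 7 = 0 := bernoulli'_eq_zero_of_odd (by decide) (by norm_num)
    have h6 : bernoulli' 6 = 1 / 42 := by
      rw [bernoulli'_def]
      norm_num [Finset.sum_range_succ, h5, Nat.choose]
    norm_num [Finset.sum_range_succ, h5, h6, h7, Nat.choose]
  rw [hb] at this
  norm_num [Nat.factorial] at this ⊢
  rw [this]
  ring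

noncomputable def T : ℂ := ∑' v : Fin 2 → ℤ, (v 0 : ℂ) * v 1 / ((v 0 : ℂ) * Complex.I + v 1) ^ 10

lemma T_eq' : T = (∑' v, et 1 9 Complex.I v) - Complex.I * ∑' v, et 2 10 Complex.I v := by
  have hI : Complex.I ∈ Metric.ball Complex.I (1/2) := by simp
  rw [← tsum_mul_left, ← (et_summable 1 9 (by norm_num) _ hI).tsum_sub ((et_summable 2 10 (by norm_num) _ hI).mul_left _)]
  refine tsum_congr fun v => ?_
  by_cases hv : v = 0
  · subst hv; simp [et]
  have := ne_zero_of_v hv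
  simp only [et]
  field_simp
  ring

lemma T_eq : T = Real.pi ^ 8 / 4725 * (-(2 * Real.pi * Complex.I) * normalizedDerivOfComplex e8 UpperHalfPlane.I / 8
    - Complex.I * (2 * Real.pi * Complex.I) ^ 2 * normalizedDerivOfComplex (normalizedDerivOfComplex e8) UpperHalfPlane.I / 72) := by
  have hI : Complex.I ∈ Metric.ball Complex.I (1/2) := by simp
  have hp : (Real.pi : ℂ) ≠ 0 := by exact_mod_cast Real.pi_ne_zero
  have him : ∀ w ∈ Metric.ball Complex.I (1/2), 0 < w.im := by
    intro w hw
    have h1 := Complex.abs_im_le_norm (w - Complex.I)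
    have h2 := mem_ball_iff_norm.mp hw
    simp at h1
    have := (abs_le.mp h1).1
    linarith
  have key : ∀ w ∈ Metric.ball Complex.I (1/2), (e8 ∘ ofComplex) w = 9450 / (2 * Real.pi ^ 8) * ∑' v, et 0 8 w v := by
    intro w hw
    rw [Function.comp_apply, ofComplex_apply_of_im_pos (him w hw)]
    have := tsum_et 8 (by norm_num) ⟨w, him w hw⟩
    rw [zeta8] at this
    change ∑' v, et 0 8 w v = _ * e8 _ at this
    rw [this]
    field_simp
  have d1 : ∀ w ∈ Metric.ball Complex.I (1/2), HasDerivAt (e8 ∘ ofComplex) (9450 / (2 * Real.pi ^ 8) * (-8 * ∑' v, et 1 9 w v)) w := by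
    intro w hw
    have h := (et_hasDerivAt 0 8 (by norm_num) w hw).const_mul (9450 / (2 * (Real.pi:ℂ) ^ 8))
    refine (h.congr_of_eventuallyEq ?_)
    filter_upwards [Metric.isOpen_ball.mem_nhds hw] with y hy using key y hy
  have d2 : HasDerivAt (normalizedDerivOfComplex e8 ∘ ofComplex)
     ((2 * Real.pi * Complex.I)⁻¹ * (9450 / (2 * Real.pi ^ 8) * (-8 * (-9 * ∑' v, et 2 10 Complex.I v)))) Complex.I := by
    have h := (((et_hasDerivAt 1 9 (by norm_num) _ hI).const_mul (-8)).const_mul (9450 / (2 * (Real.pi:ℂ) ^ 8))).const_mul (2 * Real.pi * Complex.I)⁻¹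
    refine (h.congr_of_eventuallyEq ?_)
    filter_upwards [Metric.isOpen_ball.mem_nhds hI] with y hy
    rw [Function.comp_apply, ofComplex_apply_of_im_pos (him y hy), normalizedDerivOfComplex]
    congr 1
    exact (d1 y hy).deriv
  rw [T_eq']
  have e1 : normalizedDerivOfComplex e8 UpperHalfPlane.I = (2 * Real.pi * Complex.I)⁻¹ * (9450 / (2 * Real.pi ^ 8) * (-8 * ∑' v, et 1 9 Complex.I v)) := by
    rw [normalizedDerivOfComplex]; congr 1; exact (d1 _ hI).deriv
  have e2 : normalizedDerivOfComplex (normalizedDerivOfComplex e8) UpperHalfPlane.I = (2 * Real.pi * Complex.I)⁻¹ * ((2 * Real.pi * Complex.I)⁻¹ * (9450 / (2 * Real.pi ^ 8) * (-8 * (-9 * ∑' v, et 2 10 Complex.I v)))) := by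
    rw [normalizedDerivOfComplex]; congr 1; exact d2.deriv
  rw [e1, e2]
  field_simp
  ring

lemma T_val : T = Real.pi ^ 8 / 4725 * (-Complex.I / 2 * e4 UpperHalfPlane.I ^ 2 + Complex.I * Real.pi^2 / 18 *
   (9 / 2 * e4 UpperHalfPlane.I ^ 2 / Real.pi ^ 2 + 5 / 18 * e4 UpperHalfPlane.I ^ 3)) := by
  have hp : (Real.pi : ℂ) ≠ 0 := by exact_mod_cast Real.pi_ne_zero
  rw [T_eq, DE8_I, DDE8_I, mul_pow, Complex.I_sq]
  field_simp
  ring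

end Berndt
end

section
open Filter MeasureTheory
open scoped Topology
namespace Berndt

noncomputable def hT (v : Fin 2 → ℤ) : ℂ := (v 0 : ℂ) * v 1 / ((v 0 : ℂ) * Complex.I + v 1) ^ 10

lemma hT_summable : Summable hT := by
  have hI : Complex.I ∈ Metric.ball Complex.I (1/2) := by simp
  refine ((et_summable 1 9 (by norm_num) _ hI).sub ((et_summable 2 10 (by norm_num) _ hI).mul_left Complex.I)).congr fun v => ?_
  by_cases hv : v = 0
  · subst hv; simp [et, hT]
  have := ne_zero_of_v hv
  simp only [et, hT]
  field_simp
  ring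

def rot : (Fin 2 → ℤ) ≃ (Fin 2 → ℤ) where
  toFun v := ![v 1, - v 0]
  invFun v := ![- v 1, v 0]
  left_inv v := by ext i; fin_cases i <;> simp
  right_inv v := by ext i; fin_cases i <;> simp

lemma hT_rot (v : Fin 2 → ℤ) : hT (rot v) = hT v := by
  simp only [hT, rot, Equiv.coe_fn_mk, Matrix.cons_val_zero, Matrix.cons_val_one]
  push_cast
  have : (v 1 : ℂ) * Complex.I + - v 0 = Complex.I * ((v 0 : ℂ) * Complex.I + v 1) := by
    linear_combination (-(v 0 : ℂ)) * Complex.I_sq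
  rw [this, mul_pow]
  have : Complex.I ^ 10 = -1 := by
    rw [show 10 = 4 + 4 + 2 by norm_num, pow_add, pow_add]; norm_num [Complex.I_pow_four]
  rw [this]
  rw [neg_one_mul, div_neg]
  ring

noncomputable def gT (v : Fin 2 → ℤ) : ℂ := if 0 < v 0 ∧ 0 < v 1 then hT v else 0

lemma gT_summable : Summable gT := by
  refine Summable.of_norm_bounded hT_summable.norm fun v => ?_
  rw [gT]; split_ifs <;> simp

lemma hT_split (v : Fin 2 → ℤ) : hT v = gT v + gT (rot v) + gT (rot (rot v)) + gT (rot (rot (rot v))) := by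
  simp only [gT, hT_rot]
  simp only [rot, Equiv.coe_fn_mk, Matrix.cons_val_zero, Matrix.cons_val_one]
  rcases lt_trichotomy (v 0) 0 with h0 | h0 | h0 <;> rcases lt_trichotomy (v 1) 0 with h1 | h1 | h1 <;>
    simp [h0, h1, h0.le, h1.le, not_lt.mpr, hT]

lemma T_quad : T = 4 * ∑' p : ℕ × ℕ, (p.1 : ℂ) * p.2 / (p.1 + Complex.I * p.2) ^ 10 := by
  have h1 : T = ∑' v, (gT v + gT (rot v) + gT (rot (rot v)) + gT (rot (rot (rot v)))) := by
    rw [T]; exact tsum_congr hT_split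
  have s0 := gT_summable
  have s1 : Summable fun v => gT (rot v) := s0.comp_injective rot.injective
  have s2 : Summable fun v => gT (rot (rot v)) := s1.comp_injective rot.injective
  have s3 : Summable fun v => gT (rot (rot (rot v))) := s2.comp_injective rot.injective
  have e1 : ∑' v, gT (rot v) = ∑' v, gT v := rot.tsum_eq gT
  have e2 : ∑' v, gT (rot (rot v)) = ∑' v, gT v := (rot.tsum_eq (fun v => gT (rot v))).trans e1
  have e3 : ∑' v, gT (rot (rot (rot v))) = ∑' v, gT v := (rot.tsum_eq (fun v => gT (rot (rot v)))).trans e2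
  rw [h1, Summable.tsum_add ((s0.add s1).add s2) s3, Summable.tsum_add (s0.add s1) s2, Summable.tsum_add s0 s1, e1, e2, e3]
  let φ : ℕ × ℕ → (Fin 2 → ℤ) := fun p => ![(p.2 : ℤ), (p.1 : ℤ)]
  have hφ : Function.Injective φ := by
    intro p q h
    have h0 := congrFun h 0
    have h1 := congrFun h 1
    simp [φ] at h0 h1
    ext <;> assumption
  have := hφ.tsum_eq (f := gT) (by
    intro v hv
    rw [Function.mem_support, gT] at hv
    split_ifs at hv with h
    · refine ⟨((v 1).toNat, (v 0).toNat), ?_⟩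
      ext i; fin_cases i <;> simp [φ, h.1.le, h.2.le]
    · exact absurd rfl hv)
  rw [← this]
  have h5 : ∑' p, gT (φ p) = ∑' p : ℕ × ℕ, (p.1 : ℂ) * p.2 / (p.1 + Complex.I * p.2) ^ 10 := by
    refine tsum_congr fun p => ?_
    simp only [gT, φ, hT, Matrix.cons_val_zero, Matrix.cons_val_one, Int.cast_natCast]
    split_ifs with h
    · congr 1 <;> ring
    · rw [not_and_or] at h
      rcases h with h | h
      · have : p.2 = 0 := by omega
        simp [this]
      · have : p.1 = 0 := by omega
        simp [this]
  rw [h5]; ring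

noncomputable def FA (p : ℕ × ℕ) (x : ℝ) : ℂ :=
  4 * p.1 * p.2 * ((x:ℂ) ^ 9 * Complex.exp (-(((1 - Complex.I) * p.1 + (1 + Complex.I) * p.2) * x)))

lemma FA_hasSum (x : ℝ) (hx : 0 < x) :
    ∑' p, FA p x = ((x ^ 9 / (Real.cos x - Real.cosh x) ^ 2 : ℝ) : ℂ) := by
  set a : ℂ := Complex.exp (-((1 - Complex.I) * x)) with ha
  set b : ℂ := Complex.exp (-((1 + Complex.I) * x)) with hb
  have na : ‖a‖ < 1 := by rw [ha, Complex.norm_exp]; simp [hx]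
  have nb : ‖b‖ < 1 := by rw [hb, Complex.norm_exp]; simp [hx]
  have sa := hasSum_coe_mul_geometric_of_norm_lt_one na
  have sb := hasSum_coe_mul_geometric_of_norm_lt_one nb
  have na' : Summable fun n : ℕ => ‖(n:ℂ) * a ^ n‖ := sa.summable.norm
  have nb' : Summable fun n : ℕ => ‖(n:ℂ) * b ^ n‖ := sb.summable.norm
  have h := tsum_mul_tsum_of_summable_norm na' nb'
  rw [sa.tsum_eq, sb.tsum_eq] at h
  have h1 : ∀ p, FA p x = 4 * (x:ℂ)^9 * (((p.1:ℂ) * a ^ p.1) * ((p.2:ℂ) * b ^ p.2)) := by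
    intro p
    rw [FA, ha, hb, ← Complex.exp_nat_mul, ← Complex.exp_nat_mul]
    rw [show -(((1 - Complex.I) * p.1 + (1 + Complex.I) * p.2) * x) =
      p.1 * (-((1 - Complex.I) * x)) + p.2 * (-((1 + Complex.I) * x)) by ring, Complex.exp_add]
    ring
  simp_rw [h1]
  rw [tsum_mul_left, ← h]
  have hab : a * b = Complex.exp (-x) ^ 2 := by
    rw [ha, hb, ← Complex.exp_add, ← Complex.exp_nat_mul]; congr 1; push_cast; ring
  have hs : (1 - a) * (1 - b) = - 2 * Complex.exp (-x) * (Complex.cos x - Complex.cosh x) := by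
    rw [Complex.cos, Complex.cosh]
    have e1 : a = Complex.exp (-x) * Complex.exp (x * Complex.I) := by
      rw [ha, ← Complex.exp_add]; congr 1; ring
    have e2 : b = Complex.exp (-x) * Complex.exp (-x * Complex.I) := by
      rw [hb, ← Complex.exp_add]; congr 1; ring
    have e3 : Complex.exp (-x) * Complex.exp x = 1 := by
      rw [← Complex.exp_add]; simp
    have : (1 - a) * (1 - b) = 1 - a - b + a * b := by ring
    rw [this, hab, e1, e2]
    linear_combination -e3
  have hE : Complex.exp (-x) ≠ 0 := Complex.exp_ne_zero _
  have : a / (1 - a) ^ 2 * (b / (1 - b) ^ 2) = (a * b) / ((1 - a) * (1 - b)) ^ 2 := by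
    rw [div_mul_div_comm, mul_pow]
  rw [this, hab, hs]
  push_cast
  rw [mul_pow, mul_pow]
  field_simp
  norm_num
  ring

lemma intnR (n : ℕ) (c : ℝ) (hc : 0 < c) : ∫ x in Set.Ioi (0:ℝ), (x ^ n * Real.exp (-(c * x))) = (Nat.factorial n) / c ^ (n + 1) := by
  have := Real.integral_rpow_mul_exp_neg_mul_Ioi (a := n + 1) (r := c) (by positivity) hc
  rw [Real.Gamma_nat_eq_factorial n] at this
  have e : (1 / c) ^ (n + 1 : ℝ) = 1 / c ^ (n + 1) := by
    have : (n + 1 : ℝ) = ((n + 1:ℕ):ℝ) := by norm_num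
    rw [this, Real.rpow_natCast, one_div_pow]
  rw [e] at this
  rw [show (Nat.factorial n : ℝ) / c ^ (n + 1) = 1 / c ^ (n + 1) * Nat.factorial n by ring, ← this]
  refine integral_congr_ae (Eventually.of_forall fun x => ?_)
  simp only
  congr 1
  rw [show (n + 1 - 1 : ℝ) = ((n:ℕ):ℝ) by norm_num, Real.rpow_natCast]

lemma intn_integrable (n : ℕ) (c : ℝ) (hc : 0 < c) : IntegrableOn (fun x:ℝ => x ^ n * Real.exp (-(c * x))) (Set.Ioi 0) := by
  by_contra h
  have h1 := intnR n c hc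
  rw [integral_undef h] at h1
  have : (0:ℝ) < (Nat.factorial n) / c ^ (n + 1) := by positivity
  linarith

lemma intn_norm (n : ℕ) (c : ℂ) (x : ℝ) (hx : 0 < x) : ‖(x:ℂ) ^ n * Complex.exp (-(c * x))‖ = x ^ n * Real.exp (-(c.re * x)) := by
  rw [norm_mul, Complex.norm_exp]
  congr 1
  · simp [abs_of_pos hx]
  · simp

lemma intnC_integrable (n : ℕ) (c : ℂ) (hc : 0 < c.re) : IntegrableOn (fun x:ℝ => (x:ℂ) ^ n * Complex.exp (-(c * x))) (Set.Ioi 0) := by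
  refine Integrable.mono' (intn_integrable n c.re hc) ?_ ?_
  · apply Continuous.aestronglyMeasurable
    fun_prop
  · filter_upwards [ae_restrict_mem measurableSet_Ioi] with x hx
    rw [intn_norm n c x hx]

lemma intn (n : ℕ) (c : ℂ) (hc : 0 < c.re) : ∫ x in Set.Ioi (0:ℝ), ((x:ℂ) ^ n * Complex.exp (-(c * x))) = (Nat.factorial n) / c ^ (n + 1) := by
  have hc0 : c ≠ 0 := by intro h; simp [h] at hc
  induction n with
  | zero =>
    have := integral_exp_mul_complex_Ioi (a := -c) (by simpa using hc) 0
    simp at this ⊢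
    rw [this]
  | succ n ih =>
    have hd : ∀ x ∈ Set.Ici (0:ℝ), HasDerivAt (fun x : ℝ => (x:ℂ) ^ (n+1) * Complex.exp (-(c * x)))
        ((n + 1) * ((x:ℂ) ^ n * Complex.exp (-(c * x))) - c * ((x:ℂ) ^ (n+1) * Complex.exp (-(c * x)))) x := by
      intro x _
      have h1 : HasDerivAt (fun y : ℂ => y ^ (n+1) * Complex.exp (-(c * y))) _ (x:ℂ) :=
        (hasDerivAt_pow (n+1) (x:ℂ)).mul (((hasDerivAt_id (x:ℂ)).const_mul c).neg.cexp)
      refine h1.comp_ofReal.congr_deriv ?_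
      simp
      ring
    have hi := ((intnC_integrable n c hc).const_mul ((n:ℂ) + 1))
    have hi2 := ((intnC_integrable (n+1) c hc).const_mul c)
    have ht : Tendsto (fun x : ℝ => (x:ℂ) ^ (n+1) * Complex.exp (-(c * x))) atTop (𝓝 0) := by
      rw [tendsto_zero_iff_norm_tendsto_zero]
      have h2 := isLittleO_exp_neg_mul_rpow_atTop hc (-((n+1:ℕ):ℝ))
      have h3 := h2.tendsto_div_nhds_zero
      refine h3.congr' ?_
      filter_upwards [eventually_gt_atTop 0] with x hx
      rw [intn_norm _ _ _ hx, Real.rpow_neg hx.le, Real.rpow_natCast, neg_mul]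
      field_simp
    have := integral_Ioi_of_hasDerivAt_of_tendsto' hd (hi.sub hi2) ht
    rw [integral_sub hi hi2, integral_const_mul, integral_const_mul, ih] at this
    simp at this
    have h5 : ∫ x in Set.Ioi (0:ℝ), ((x:ℂ) ^ (n+1) * Complex.exp (-(c * x))) = ((n:ℂ) + 1) * (Nat.factorial n / c ^ (n+1)) / c := by
      rw [eq_div_iff hc0]; linear_combination -this
    rw [h5, Nat.factorial_succ]
    push_cast
    field_simp
    ring

lemma int9 (c : ℂ) (hc : 0 < c.re) : ∫ x in Set.Ioi (0:ℝ), ((x:ℂ) ^ 9 * Complex.exp (-(c * x))) = (Nat.factorial 9) / c ^ 10 := intn 9 c hc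
lemma int9R (c : ℝ) (hc : 0 < c) : ∫ x in Set.Ioi (0:ℝ), (x ^ 9 * Real.exp (-(c * x))) = (Nat.factorial 9) / c ^ 10 := intnR 9 c hc
lemma int9_integrable (c : ℝ) (hc : 0 < c) : IntegrableOn (fun x:ℝ => x ^ 9 * Real.exp (-(c * x))) (Set.Ioi 0) := intn_integrable 9 c hc

lemma FA_zero (p : ℕ × ℕ) (h : p.1 = 0 ∨ p.2 = 0) : FA p = fun _ => 0 := by
  funext x; rcases h with h | h <;> simp [FA, h]

lemma FA_norm (p : ℕ × ℕ) (x : ℝ) (hx : 0 < x) : ‖FA p x‖ = 4 * p.1 * p.2 * (x ^ 9 * Real.exp (-(((p.1:ℝ) + p.2) * x))) := by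
  rw [FA, norm_mul, norm_mul (_ ^ 9), Complex.norm_exp]
  congr 1
  · simp
  · congr 1
    · simp [abs_of_pos hx]
    · simp

lemma FA_integral_norm (p : ℕ × ℕ) : ∫ x in Set.Ioi (0:ℝ), ‖FA p x‖ = 4 * p.1 * p.2 * (Nat.factorial 9 / ((p.1:ℝ) + p.2) ^ 10) := by
  by_cases h : p.1 = 0 ∨ p.2 = 0
  · rw [FA_zero p h]; rcases h with h | h <;> simp [h]
  push Not at h
  have : (0:ℝ) < p.1 := by have := h.1; positivity
  have : (0:ℝ) < p.2 := by have := h.2; positivity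
  rw [setIntegral_congr_fun measurableSet_Ioi (fun x hx => FA_norm p x hx), integral_const_mul, int9R _ (by positivity)]

lemma FA_integrable (p : ℕ × ℕ) : Integrable (FA p) (volume.restrict (Set.Ioi 0)) := by
  by_cases h : p.1 = 0 ∨ p.2 = 0
  · rw [FA_zero p h]; exact integrable_zero _ _ _
  push Not at h
  have : (0:ℝ) < p.1 := by have := h.1; positivity
  have : (0:ℝ) < p.2 := by have := h.2; positivity
  have h1 := (int9_integrable ((p.1:ℝ) + p.2) (by positivity)).const_mul (4 * p.1 * p.2 : ℝ)
  refine Integrable.mono' h1 ?_ ?_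
  · apply Continuous.aestronglyMeasurable
    unfold FA; fun_prop
  · filter_upwards [ae_restrict_mem measurableSet_Ioi] with x hx
    rw [FA_norm p x hx]

lemma FA_integral (p : ℕ × ℕ) : ∫ x in Set.Ioi (0:ℝ), FA p x = 45360 * Complex.I * ((p.1 : ℂ) * p.2 / (p.1 + Complex.I * p.2) ^ 10) := by
  by_cases h : p.1 = 0 ∨ p.2 = 0
  · rw [FA_zero p h]; rcases h with h | h <;> simp [h]
  push Not at h
  have h1 : (0:ℝ) < p.1 := by have := h.1; positivity
  have h2 : (0:ℝ) < p.2 := by have := h.2; positivity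
  unfold FA
  rw [integral_const_mul, int9]
  · have e : (1 - Complex.I) * p.1 + (1 + Complex.I) * p.2 = (1 - Complex.I) * (p.1 + Complex.I * p.2) := by
      linear_combination p.2 * Complex.I_sq
    have e2 : (1 - Complex.I) ^ 10 = -32 * Complex.I := by
      have : (1 - Complex.I) ^ 2 = -2 * Complex.I := by linear_combination Complex.I_sq
      rw [show 10 = 2 * 5 by norm_num, pow_mul, this, mul_pow, show 5 = 4 + 1 by norm_num, pow_add Complex.I, Complex.I_pow_four]
      ring
    rw [e, mul_pow, e2]
    have hI := Complex.I_ne_zero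
    have : ((p.1:ℂ) + Complex.I * p.2) ≠ 0 := by
      intro h; have := congrArg Complex.re h; simp at this; exact h1.ne' (by exact_mod_cast this)
    have h9 : ((Nat.factorial 9 : ℕ) : ℂ) = 362880 := by norm_num [Nat.factorial]
    rw [h9]
    have hY := pow_ne_zero 10 this
    generalize ((p.1:ℂ) + Complex.I * p.2) ^ 10 = Y at hY
    field_simp
    linear_combination -1451520 * p.1 * p.2 * Complex.I_sq
  · simp; positivity

lemma summ_norm : Summable fun p : ℕ × ℕ => ∫ x in Set.Ioi (0:ℝ), ‖FA p x‖ := by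
  simp_rw [FA_integral_norm]
  have hs : Summable fun n : ℕ => 1 / (n:ℝ) ^ 4 := Real.summable_one_div_nat_pow.mpr (by norm_num)
  have := (hs.mul_of_nonneg hs (fun n => by positivity) (fun n => by positivity)).mul_left (4 * Nat.factorial 9 : ℝ)
  refine Summable.of_nonneg_of_le (fun p => by positivity) (fun p => ?_) this
  by_cases h : p.1 = 0 ∨ p.2 = 0
  · have : 4 * (p.1:ℝ) * p.2 * (Nat.factorial 9 / ((p.1:ℝ) + p.2) ^ 10) = 0 := by
      rcases h with h | h <;> simp [h]
    rw [this]; positivity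
  push Not at h
  have h1 : (0:ℝ) < p.1 := by have := h.1; positivity
  have h2 : (0:ℝ) < p.2 := by have := h.2; positivity
  have h3 : (p.1:ℝ) ^ 5 * (p.2:ℝ)^5 ≤ ((p.1:ℝ) + p.2) ^ 10 := by
    rw [show 10 = 5 + 5 by norm_num, pow_add]
    gcongr <;> linarith
  calc 4 * (p.1:ℝ) * p.2 * (Nat.factorial 9 / ((p.1:ℝ) + p.2) ^ 10) ≤ 4 * (p.1:ℝ) * p.2 * (Nat.factorial 9 / ((p.1:ℝ) ^ 5 * (p.2:ℝ)^5)) := by gcongr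
    _ = _ := by field_simp

lemma integral_eq_T : ((∫ x in Set.Ioi (0 : ℝ), x ^ 9 / (Real.cos x - Real.cosh x) ^ 2 : ℝ) : ℂ) = 11340 * Complex.I * T := by
  have h := (hasSum_integral_of_summable_integral_norm FA_integrable summ_norm).tsum_eq
  rw [setIntegral_congr_fun measurableSet_Ioi (fun x hx => FA_hasSum x hx)] at h
  rw [← integral_complex_ofReal, ← h, T_quad]
  simp_rw [FA_integral]
  rw [tsum_mul_left]
  ring

lemma integral_eq : ((∫ x in Set.Ioi (0 : ℝ), x ^ 9 / (Real.cos x - Real.cosh x) ^ 2 : ℝ) : ℂ) =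
    3 / 5 * Real.pi ^ 8 * e4 UpperHalfPlane.I ^ 2 - Real.pi ^ 10 * e4 UpperHalfPlane.I ^ 3 / 27 := by
  have hp : (Real.pi : ℂ) ≠ 0 := by exact_mod_cast Real.pi_ne_zero
  rw [integral_eq_T, T_val]
  field_simp
  rw [Complex.I_sq]
  ring

end Berndt
end

section
open Filter MeasureTheory PeriodPair
open scoped Topology
namespace Berndt

noncomputable def L0 : PeriodPair := ⟨1, Complex.I, by
  have := Complex.basisOneI.linearIndependent
  rwa [Complex.coe_basisOneI] at this⟩

lemma L0_mem {x : ℂ} : x ∈ L0.lattice ↔ ∃ m n : ℤ, (m:ℂ) + n * Complex.I = x := by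
  rw [mem_lattice]; simp [L0]

noncomputable def latE : (Fin 2 → ℤ) ≃ L0.lattice :=
  ((finTwoArrowEquiv ℤ).trans (Equiv.prodComm ℤ ℤ)).trans L0.latticeEquivProd.symm.toEquiv

lemma latE_apply (v : Fin 2 → ℤ) : ((latE v : L0.lattice) : ℂ) = (v 0 : ℂ) * Complex.I + v 1 := by
  have := L0.latticeEquiv_symm_apply ((v 1, v 0))
  simp [latE]
  rw [this]
  simp [L0]; ring

lemma G_eq (k : ℕ) : L0.G k = ∑' v, et 0 k Complex.I v := by
  unfold PeriodPair.G
  rw [← latE.tsum_eq]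
  simp [latE_apply, et]

lemma G_four : L0.G 4 = Real.pi ^ 4 / 45 * e4 UpperHalfPlane.I := by
  have := tsum_et 4 (by norm_num) UpperHalfPlane.I
  rw [UpperHalfPlane.coe_I] at this
  rw [G_eq, this]
  push_cast
  rw [riemannZeta_four]
  simp only [e4]
  ring

lemma G_six : L0.G 6 = 0 := by
  have := tsum_et 6 (by norm_num) UpperHalfPlane.I
  rw [UpperHalfPlane.coe_I] at this
  rw [G_eq, this]
  have h := E6_I
  simp only [e6] at h
  rw [h, mul_zero]

lemma e4_real : ∃ r : ℝ, 0 < r ∧ e4 UpperHalfPlane.I = r := by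
  have h := EisensteinSeries.q_expansion_bernoulli (k := 4) (by norm_num) (by decide) UpperHalfPlane.I
  have hb : bernoulli 4 = -1/30 := by
    rw [bernoulli_eq_bernoulli'_of_ne_one (by norm_num)]
    norm_num
  rw [hb] at h
  refine ⟨1 + 240 * ∑' n : ℕ+, (ArithmeticFunction.sigma 3 n : ℝ) * Real.exp (-2 * Real.pi) ^ (n:ℕ), ?_, ?_⟩
  · have : 0 ≤ ∑' n : ℕ+, (ArithmeticFunction.sigma 3 n : ℝ) * Real.exp (-2 * Real.pi) ^ (n:ℕ) :=
      tsum_nonneg fun n => by positivity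
    positivity
  · simp only [e4]
    rw [h]
    have hI : Complex.exp (2 * Real.pi * Complex.I * (UpperHalfPlane.I : UpperHalfPlane)) = ((Real.exp (-2 * Real.pi) : ℝ) : ℂ) := by
      rw [UpperHalfPlane.coe_I, mul_assoc, Complex.I_mul_I]
      push_cast; congr 1; ring
    rw [hI]
    push_cast
    simp only [zpow_natCast]
    norm_num

noncomputable def latC : L0.lattice ≃ L0.lattice where
  toFun l := ⟨(starRingEnd ℂ) l.1, by
    obtain ⟨m, n, h⟩ := L0_mem.1 l.2
    exact L0_mem.2 ⟨m, -n, by rw [← h]; simp⟩⟩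
  invFun l := ⟨(starRingEnd ℂ) l.1, by
    obtain ⟨m, n, h⟩ := L0_mem.1 l.2
    exact L0_mem.2 ⟨m, -n, by rw [← h]; simp⟩⟩
  left_inv l := by simp
  right_inv l := by simp

lemma P_conj (x : ℝ) : (starRingEnd ℂ) (weierstrassP L0 x) = weierstrassP L0 x := by
  unfold weierstrassP
  rw [Complex.conj_tsum]
  conv_rhs => rw [← latC.tsum_eq]
  simp [latC]

lemma dP_conj (x : ℝ) : (starRingEnd ℂ) (derivWeierstrassP L0 x) = derivWeierstrassP L0 x := by
  unfold derivWeierstrassP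
  rw [map_neg, Complex.conj_tsum]
  conv_rhs => rw [← latC.tsum_eq]
  have h2 : (starRingEnd ℂ) (2:ℂ) = 2 := Complex.conj_ofNat 2
  simp [latC, h2]

noncomputable def p (x : ℝ) : ℝ := (weierstrassP L0 x).re
noncomputable def dp (x : ℝ) : ℝ := (derivWeierstrassP L0 x).re

lemma p_coe (x : ℝ) : (p x : ℂ) = weierstrassP L0 x := Complex.conj_eq_iff_re.1 (P_conj x)
lemma dp_coe (x : ℝ) : (dp x : ℂ) = derivWeierstrassP L0 x := Complex.conj_eq_iff_re.1 (dP_conj x)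

lemma not_mem {x : ℝ} (hx : x ∈ Set.Ioo (0:ℝ) 1) : (x : ℂ) ∉ L0.lattice := by
  intro h
  obtain ⟨m, n, h⟩ := L0_mem.1 h
  have := congrArg Complex.re h
  simp at this
  have h1 : (0:ℝ) < m := by rw [this]; exact hx.1
  have h2 : (m:ℝ) < 1 := by rw [this]; exact hx.2
  have h3 : 0 < m := by exact_mod_cast h1
  have h4 : m < 1 := by exact_mod_cast h2
  omega

lemma P_hasDerivAt {z : ℂ} (hz : z ∉ L0.lattice) : HasDerivAt (weierstrassP L0) (derivWeierstrassP L0 z) z := by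
  rw [← deriv_weierstrassP]
  exact (L0.analyticOnNhd_weierstrassP z hz).differentiableAt.hasDerivAt

lemma p_hasDerivAt {x : ℝ} (hx : x ∈ Set.Ioo (0:ℝ) 1) : HasDerivAt p (dp x) x :=
  (P_hasDerivAt (not_mem hx)).real_of_complex

lemma p_tendsto : Tendsto p (𝓝[>] 0) atTop := by
  have h1 : ∀ x : ℝ, p x = (weierstrassPExcept L0 0 x).re + (x^2)⁻¹ := by
    intro x
    have := L0.weierstrassPExcept_add 0 x
    simp only [p, ← this]
    have e : (1 / ((x:ℂ) - ((0 : L0.lattice) : ℂ)) ^ 2 - 1 / ((0 : L0.lattice) : ℂ) ^ 2) = (((x^2)⁻¹ : ℝ) : ℂ) := by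
      push_cast; simp
    rw [e, Complex.add_re, Complex.ofReal_re]
    simp
  have h2 : Tendsto (fun x : ℝ => (weierstrassPExcept L0 0 x).re) (𝓝[>] 0) (𝓝 (weierstrassPExcept L0 0 0).re) := by
    have h := (L0.analyticAt_weierstrassPExcept 0).continuousAt
    have h' : ContinuousAt (fun x : ℝ => (weierstrassPExcept L0 0 x).re) 0 := by
      apply Complex.continuous_re.continuousAt.comp
      apply ContinuousAt.comp (g := weierstrassPExcept L0 0) (by simpa using h) Complex.continuous_ofReal.continuousAt
    have := h'.tendsto.mono_left (nhdsWithin_le_nhds (s := Set.Ioi 0))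
    simpa using this
  simp_rw [funext h1]
  refine h2.add_atTop ?_
  apply Tendsto.inv_tendsto_nhdsGT_zero
  apply tendsto_nhdsWithin_iff.2 ⟨?_, ?_⟩
  · have : ContinuousAt (fun x:ℝ => x^2) 0 := by fun_prop
    have := this.tendsto.mono_left (nhdsWithin_le_nhds (s := Set.Ioi 0))
    simpa using this
  · filter_upwards [self_mem_nhdsWithin] with x hx
    have : 0 < x := hx
    simp; positivity

lemma dp_half : dp (1/2) = 0 := by
  have h1 := L0.derivWeierstrassP_neg ((1/2 : ℝ) : ℂ)
  have h2 := L0.derivWeierstrassP_add_coe (-((1/2 : ℝ) : ℂ)) ⟨1, L0.ω₁_mem_lattice⟩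
  have h3 : (-((1/2 : ℝ) : ℂ)) + 1 = ((1/2 : ℝ) : ℂ) := by push_cast; norm_num
  simp only [h3] at h2
  rw [h1] at h2
  unfold dp
  have : derivWeierstrassP L0 ((1/2 : ℝ) : ℂ) = 0 := by linear_combination h2 / 2
  rw [this]; simp

lemma g3 : L0.g₃ = 0 := by simp [g₃, G_six]

lemma ode {c : ℝ} (hc : L0.g₂ = c) {x : ℝ} (hx : x ∈ Set.Ioo (0:ℝ) 1) : dp x ^ 2 = 4 * p x ^ 3 - c * p x := by
  have := L0.derivWeierstrassP_sq x (not_mem hx)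
  rw [g3, hc, ← p_coe, ← dp_coe] at this
  norm_num at this
  exact_mod_cast this

lemma ddp_aux : ∀ z ∉ L0.lattice, 2 * deriv (derivWeierstrassP L0) z - 12 * weierstrassP L0 z ^ 2 + L0.g₂ = 0 := by
  have hpre : IsPreconnected ((L0.lattice : Set ℂ)ᶜ) := by
    have : (L0.lattice : Set ℂ).Countable := by
      have : Countable L0.lattice := latE.symm.injective.countable
      exact Set.countable_coe_iff.1 this
    exact (this.isConnected_compl_of_one_lt_rank (by simp [Complex.rank_real_complex])).isPreconnected
  have hA := L0.analyticOnNhd_derivWeierstrassP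
  have hB : AnalyticOnNhd ℂ (fun z => 2 * deriv (derivWeierstrassP L0) z - 12 * weierstrassP L0 z ^ 2 + L0.g₂) (L0.lattice : Set ℂ)ᶜ := by
    have h1 := hA.deriv
    have h2 := L0.analyticOnNhd_weierstrassP
    intro z hz
    have h1 := h1 z hz
    have h2 := h2 z hz
    fun_prop
  have hmul : ∀ z ∈ (L0.lattice : Set ℂ)ᶜ, derivWeierstrassP L0 z * (2 * deriv (derivWeierstrassP L0) z - 12 * weierstrassP L0 z ^ 2 + L0.g₂) = 0 := by
    intro z hz
    have ho : (L0.lattice : Set ℂ)ᶜ ∈ 𝓝 z := L0.isClosed_lattice.isOpen_compl.mem_nhds hz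
    have h1 := (hA z hz).differentiableAt.hasDerivAt.pow 2
    have h2 := P_hasDerivAt hz
    have h3 := (((h2.pow 3).const_mul 4).sub (h2.const_mul L0.g₂))
    have h4 : (derivWeierstrassP L0 ^ 2) =ᶠ[𝓝 z] ((fun y => 4 * (weierstrassP L0 ^ 3) y) - fun y => L0.g₂ * weierstrassP L0 y) := by
      filter_upwards [ho] with w hw
      have := L0.derivWeierstrassP_sq w hw
      rw [g3] at this
      simp [this]
    have := h1.unique (h3.congr_of_eventuallyEq h4)
    norm_num at this
    linear_combination this
  rcases hA.eq_zero_or_eq_zero_of_mul_eq_zero hB hmul hpre with h | h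
  · exfalso
    have ht := p_tendsto
    have e1 := ht.eventually (eventually_gt_atTop (‖L0.g₂‖ + 1))
    have e2 : ∀ᶠ x : ℝ in 𝓝[>] 0, x ∈ Set.Ioo (0:ℝ) 1 := Ioo_mem_nhdsGT (by norm_num)
    obtain ⟨x, hx1, hx⟩ := (e1.and e2).exists
    have h1 := L0.derivWeierstrassP_sq x (not_mem hx)
    rw [h _ (not_mem hx), g3, ← p_coe] at h1
    have hn := norm_nonneg L0.g₂
    have hp : (p x : ℂ) ≠ 0 := by
      have : 0 < p x := by linarith
      exact_mod_cast this.ne'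
    have h2 : L0.g₂ = ((4 * p x ^ 2 : ℝ) : ℂ) := by
      push_cast
      apply mul_right_cancel₀ hp
      linear_combination h1
    have h3 : ‖L0.g₂‖ = 4 * p x ^ 2 := by
      rw [h2, Complex.norm_real, Real.norm_of_nonneg (by positivity)]
    nlinarith
  · exact h

lemma dp_hasDerivAt {c : ℝ} (hc : L0.g₂ = c) {x : ℝ} (hx : x ∈ Set.Ioo (0:ℝ) 1) :
    HasDerivAt dp (6 * p x ^ 2 - c / 2) x := by
  have h := (L0.analyticOnNhd_derivWeierstrassP x (not_mem hx)).differentiableAt.hasDerivAt.real_of_complex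
  have h2 := ddp_aux x (not_mem hx)
  rw [hc, ← p_coe] at h2
  have : deriv (derivWeierstrassP L0) x = ((6 * p x ^ 2 - c / 2 : ℝ) : ℂ) := by
    push_cast
    linear_combination h2 / 2
  rw [this, Complex.ofReal_re] at h
  exact h

end Berndt
end

section
open Filter MeasureTheory
open scoped Topology
namespace Berndt

lemma beta_int : ∫ x in Set.Ioo (0:ℝ) 1, x ^ (-3/4 : ℝ) * (1 - x) ^ (-1/2 : ℝ) =
    Real.Gamma (1/4) * Real.Gamma (1/2) / Real.Gamma (3/4) := by
  have h := ProbabilityTheory.beta_eq_betaIntegralReal (1/4) (1/2) (by norm_num) (by norm_num)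
  unfold ProbabilityTheory.beta at h
  norm_num at h
  norm_num
  rw [h, Complex.betaIntegral, intervalIntegral.integral_of_le (by norm_num), integral_Ioc_eq_integral_Ioo]
  rw [← Complex.ofReal_re (∫ x in Set.Ioo (0:ℝ) 1, x ^ (-(3/4) : ℝ) * (1 - x) ^ (-(1/2) : ℝ)), ← integral_complex_ofReal]
  congr 1
  apply setIntegral_congr_fun measurableSet_Ioo
  intro x hx
  have h1 : 0 ≤ x := hx.1.le
  have h2 : 0 ≤ 1 - x := by linarith [hx.2]
  simp only
  push_cast [Complex.ofReal_cpow h1, Complex.ofReal_cpow h2]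
  norm_num

lemma real_part (p dp : ℝ → ℝ) (a : ℝ) (ha : 0 < a)
    (hp : ∀ x ∈ Set.Ioo (0:ℝ) 1, HasDerivAt p (dp x) x)
    (hdp : ∀ x ∈ Set.Ioo (0:ℝ) 1, HasDerivAt dp (6 * p x ^ 2 - 2 * a ^ 2) x)
    (ode : ∀ x ∈ Set.Ioo (0:ℝ) 1, dp x ^ 2 = 4 * p x ^ 3 - 4 * a ^ 2 * p x)
    (ht : Tendsto p (𝓝[>] 0) atTop) (hh : dp (1/2) = 0) :
    ∫ x in Set.Ioo (0:ℝ) 1, x ^ (-3/4 : ℝ) * (1 - x) ^ (-1/2 : ℝ) = 2 * √a := by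
  have hpc : ContinuousOn p (Set.Ioo (0:ℝ) 1) := fun x hx => (hp x hx).continuousAt.continuousWithinAt
  have hge : ∀ x ∈ Set.Ioo (0:ℝ) 1, a ≤ p x := by
    intro x hx
    by_contra! hlt
    have e2 : ∀ᶠ x : ℝ in 𝓝[>] 0, x ∈ Set.Ioo (0:ℝ) 1 := Ioo_mem_nhdsGT (by norm_num)
    obtain ⟨x1, hx1, hx1'⟩ := ((ht.eventually (eventually_gt_atTop a)).and e2).exists
    have h0 : p x ≤ 0 := by
      by_contra! h0
      have := ode x hx
      have h1 : 0 ≤ 4 * p x * (p x ^ 2 - a ^ 2) := by nlinarith [sq_nonneg (dp x)]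
      have h2 : p x ^ 2 < a ^ 2 := by nlinarith
      nlinarith [mul_pos h0 (sub_pos.2 h2)]
    have hm : a / 2 ∈ p '' Set.Ioo (0:ℝ) 1 :=
      (isPreconnected_Ioo.image p hpc).ordConnected.out (Set.mem_image_of_mem p hx) (Set.mem_image_of_mem p hx1') ⟨by linarith, by linarith⟩
    obtain ⟨y, hy, hya⟩ := hm
    have := ode y hy
    rw [hya] at this
    nlinarith [sq_nonneg (dp y), pow_pos ha 3]
  have hmono : StrictMonoOn dp (Set.Ioo (0:ℝ) 1) := by
    apply strictMonoOn_of_deriv_pos (convex_Ioo _ _) (fun x hx => (hdp x hx).continuousAt.continuousWithinAt)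
    intro x hx
    rw [interior_Ioo] at hx
    rw [(hdp x hx).deriv]
    nlinarith [hge x hx]
  have hsub : ∀ x ∈ Set.Ioo (0:ℝ) (1/2), x ∈ Set.Ioo (0:ℝ) 1 := fun x hx => ⟨hx.1, by linarith [hx.2]⟩
  have hm : (1/2 : ℝ) ∈ Set.Ioo (0:ℝ) 1 := by norm_num
  have hneg : ∀ x ∈ Set.Ioo (0:ℝ) (1/2), dp x < 0 := fun x hx => by
    rw [← hh]; exact hmono (hsub x hx) hm hx.2
  have hgt : ∀ x ∈ Set.Ioo (0:ℝ) (1/2), a < p x := by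
    intro x hx
    refine lt_of_le_of_ne (hge x (hsub x hx)) fun h => ?_
    have := ode x (hsub x hx)
    rw [← h] at this
    nlinarith [hneg x hx]
  have hhalf : p (1/2) = a := by
    have h1 := ode _ hm
    have h2 := hge _ hm
    rw [hh] at h1
    have h3 : p (1/2) * (p (1/2) + a) * (p (1/2) - a) = 0 := by linarith
    have : p (1/2) * (p (1/2) + a) ≠ 0 := by
      have : 0 < p (1/2) := by linarith
      positivity
    linarith [(mul_eq_zero.1 h3).resolve_left this]
  set u : ℝ → ℝ := fun x => a ^ 2 / p x ^ 2 with hu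
  set u' : ℝ → ℝ := fun x => - 2 * a ^ 2 * dp x / p x ^ 3 with hu'
  have hud : ∀ x ∈ Set.Ioo (0:ℝ) 1, HasDerivAt u (u' x) x := by
    intro x hx
    have hpx : 0 < p x := ha.trans_le (hge x hx)
    have := (((hp x hx).pow 2).fun_inv (by simp; positivity)).const_mul (a^2)
    refine (this.congr_deriv ?_)
    simp [hu']
    field_simp
  have hupos : ∀ x ∈ Set.Ioo (0:ℝ) (1/2), 0 < u' x := by
    intro x hx
    have h1 : 0 < p x := ha.trans (hgt x hx)
    have h2 : 0 < - dp x := by linarith [hneg x hx]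
    have : u' x = 2 * a ^ 2 * (- dp x) / p x ^ 3 := by simp [hu']
    rw [this]; positivity
  have hinj : Set.InjOn u (Set.Ioo (0:ℝ) (1/2)) := by
    apply StrictMonoOn.injOn
    apply strictMonoOn_of_deriv_pos (convex_Ioo _ _) (fun x hx => (hud x (hsub x hx)).continuousAt.continuousWithinAt)
    intro x hx
    rw [interior_Ioo] at hx
    rw [(hud x (hsub x hx)).deriv]
    exact hupos x hx
  have himg : u '' Set.Ioo (0:ℝ) (1/2) = Set.Ioo 0 1 := by
    apply Set.Subset.antisymm
    · rintro _ ⟨x, hx, rfl⟩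
      have h1 : a < p x := hgt x hx
      have h2 : 0 < p x := ha.trans h1
      refine ⟨by simp only [hu]; positivity, ?_⟩
      simp only [hu]
      rw [div_lt_one (by positivity)]
      nlinarith
    · apply isPreconnected_Ioo.intermediate_value_Ioo (l₁ := 𝓝[>] 0) (l₂ := 𝓝[<] (1/2))
      · exact le_principal_iff.2 (Ioo_mem_nhdsGT (by norm_num))
      · exact le_principal_iff.2 (Ioo_mem_nhdsLT (by norm_num))
      · exact fun x hx => (hud x (hsub x hx)).continuousAt.continuousWithinAt
      · exact ((tendsto_pow_atTop (by norm_num)).comp ht).const_div_atTop _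
      · have := (hud _ hm).continuousAt.tendsto.mono_left (nhdsWithin_le_nhds (s := Set.Iio (1/2)))
        have e : u (1/2) = 1 := by
          simp only [hu]; rw [hhalf]; field_simp
        rwa [e] at this
  rw [← himg, integral_image_eq_integral_abs_deriv_smul measurableSet_Ioo (fun x hx => (hud x (hsub x hx)).hasDerivWithinAt) hinj]
  rw [setIntegral_congr_fun (g := fun _ => 4 * √a) measurableSet_Ioo]
  · simp; ring
  intro x hx
  simp only [smul_eq_mul]
  rw [abs_of_pos (hupos x hx)]
  have h1 : a < p x := hgt x hx
  have h2 : 0 < p x := ha.trans h1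
  set s := √(a / p x) with hs
  have hs0 : 0 < s := Real.sqrt_pos.2 (by positivity)
  have hs2 : s ^ 2 = a / p x := Real.sq_sqrt (by positivity)
  have hus : u x = s ^ 4 := by
    simp only [hu]
    rw [show s ^ 4 = (s^2)^2 by ring, hs2]; ring
  have hu1 : u x < 1 := (himg ▸ Set.mem_image_of_mem u hx : u x ∈ Set.Ioo (0:ℝ) 1).2
  have r1 : u x ^ (-3/4 : ℝ) = (s ^ 3)⁻¹ := by
    rw [hus, ← Real.rpow_natCast, ← Real.rpow_mul hs0.le, ← Real.rpow_natCast, ← Real.rpow_neg hs0.le]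
    norm_num
  set w := √(1 - u x) with hw
  have hw0 : 0 < w := Real.sqrt_pos.2 (by linarith)
  have hw2 : w ^ 2 = 1 - u x := Real.sq_sqrt (by linarith)
  have r2 : (1 - u x) ^ (-1/2 : ℝ) = w⁻¹ := by
    rw [show (-1/2 : ℝ) = -(1/2) by norm_num, Real.rpow_neg (by linarith), ← Real.sqrt_eq_rpow]
  have hqa : 0 < √a := Real.sqrt_pos.2 ha
  have hqa2 : √a ^ 2 = a := Real.sq_sqrt ha.le
  have hpa : p x = √a ^ 2 / s ^ 2 := by rw [hs2, hqa2]; field_simp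
  have hdpx : - dp x = 2 * √a ^ 3 / s ^ 3 * w := by
    have h5 := hneg x hx
    have : (- dp x) ^ 2 = (2 * √a ^ 3 / s ^ 3 * w) ^ 2 := by
      rw [neg_sq, ode x (hsub x hx), mul_pow, hw2, hus, hpa]
      nth_rewrite 2 [← hqa2]
      field_simp
      ring
    exact (pow_left_inj₀ (by linarith) (by positivity) (by norm_num)).1 this
  rw [r1, r2]
  have : u' x = 2 * a ^ 2 * (- dp x) / p x ^ 3 := by simp [hu']
  rw [this, hdpx, hpa]
  nth_rewrite 1 [← hqa2]
  field_simp
  ring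

lemma e4_I : e4 UpperHalfPlane.I = ((3 * Real.Gamma (1/4) ^ 8 / (64 * Real.pi ^ 6) : ℝ) : ℂ) := by
  obtain ⟨r, hr, h⟩ := e4_real
  have hpi := Real.pi_pos
  have hc : L0.g₂ = ((4 * Real.pi ^ 4 * r / 3 : ℝ) : ℂ) := by
    simp only [PeriodPair.g₂, G_four, h]
    push_cast; ring
  set c := 4 * Real.pi ^ 4 * r / 3 with hcd
  have hc0 : 0 < c := by positivity
  set a := √c / 2 with ha
  have ha0 : 0 < a := by positivity
  have hca : c = 4 * a ^ 2 := by rw [ha, div_pow, Real.sq_sqrt hc0.le]; ring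
  have hB := real_part p dp a ha0 (fun x hx => p_hasDerivAt hx)
    (fun x hx => by have := dp_hasDerivAt hc hx; rw [hca] at this; convert! this using 1; ring)
    (fun x hx => by have := ode hc hx; rw [hca] at this; exact this) p_tendsto dp_half
  rw [beta_int, Real.Gamma_one_half_eq] at hB
  have hG := Real.Gamma_mul_Gamma_one_sub (1/4)
  rw [show (1 - 1/4 : ℝ) = 3/4 by norm_num, show Real.pi * (1/4) = Real.pi / 4 by ring, Real.sin_pi_div_four] at hG
  set g := Real.Gamma (1/4) with hg
  have hg0 : 0 < g := Real.Gamma_pos_of_pos (by norm_num)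
  have hk0 : 0 < Real.Gamma (3/4) := Real.Gamma_pos_of_pos (by norm_num)
  set k := Real.Gamma (3/4)
  have s2 : √2 ^ 2 = (2:ℝ) := Real.sq_sqrt (by norm_num)
  have hk : k = 2 * Real.pi / (√2 * g) := by
    field_simp at hG ⊢
    linarith
  have sp : √Real.pi ^ 2 = Real.pi := Real.sq_sqrt hpi.le
  have sa : √a ^ 2 = a := Real.sq_sqrt ha0.le
  have ec : c = (g * √Real.pi / k) ^ 4 / 4 := by
    rw [hB, mul_pow, show √a ^ 4 = (√a ^ 2) ^ 2 by ring, sa, hca]; ring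
  have ec2 : c = g ^ 8 / (16 * Real.pi ^ 2) := by
    rw [ec, hk]
    have e1 : (g * √Real.pi / (2 * Real.pi / (√2 * g))) ^ 4 = g ^ 8 * (√Real.pi ^ 2) ^ 2 * (√2 ^ 2) ^ 2 / (16 * Real.pi ^ 4) := by
      field_simp
      ring
    rw [e1, sp, s2]
    field_simp
    ring
  rw [h]
  congr 1
  have : r = 3 * c / (4 * Real.pi ^ 4) := by rw [hcd]; field_simp
  rw [this, ec2]
  field_simp
  ring

end Berndt
end

theorem berndt_integral_x9_minus_sq :
    ∫ x in Set.Ioi (0 : ℝ), x ^ 9 / (Real.cos x - Real.cosh x) ^ 2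
      = 27 * Real.Gamma (1/4) ^ 16 / (5 * 2 ^ 12 * Real.pi ^ 4)
        - Real.Gamma (1/4) ^ 24 / (2 ^ 18 * Real.pi ^ 8) := by
  have h := Berndt.integral_eq
  rw [Berndt.e4_I] at h
  have h2 : ∫ x in Set.Ioi (0 : ℝ), x ^ 9 / (Real.cos x - Real.cosh x) ^ 2 =
      3/5 * Real.pi^8 * (3 * Real.Gamma (1/4) ^ 8 / (64 * Real.pi ^ 6)) ^ 2
        - Real.pi^10 * (3 * Real.Gamma (1/4) ^ 8 / (64 * Real.pi ^ 6)) ^ 3 / 27 := by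
    apply Complex.ofReal_injective
    rw [h]
    push_cast
    ring
  rw [h2]
  have hpi := Real.pi_pos
  field_simp
  ring
end
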